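/- arXiv:2605.13882 — 4 statements merged into one kernel-verified Lean document; each statement's English description precedes it below -/
import Mathlib

section
/- The integral R_C(1, 1/2) = ∫_0^∞ x·cos(πx/2)/(exp(2π√x) − 1) dx converges and equals (13 − 4π)/(8π²). -/
open MeasureTheory Real Set

/-!
Substituting `x = t²` turns the integral into the real part of
`∫ 2 t³ e(t) / (exp (2πt) - 1) dt` with `e(t) = exp (πit²/2)`; expanding the geometric series gives
the terms `∫ 2 t³ E_k(t) dt`, where `E_k(z) = e(z) exp (-2πkz)` and `k ≥ 1`. The quartic
`p(z) = (i/4) z² (z - 2i)²` satisfies `p(z) - p(z + 2i) = 2z³`, and `E_k(z + 2i) = E_{k+1}(z)`, so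
by Cauchy's theorem each term equals a telescoping difference plus the integral of `p E_{k-1}`
along the segment from `0` to `2i`. Those segment integrals are the Fourier coefficients of a
function supported on `[0, 2]`; they are symmetric under `k ↦ -(k + 1)` because
`p(2i - z) = p(z)`, so Poisson summation evaluates their sum. What remains of the telescoping
series is the integral of `p e` along the path `0 → 2i → 2i + ∞`, a combination of Gaussian moments.
-/

section ExponentialDecay

open Complex Filter Topology Polynomial

/-- Exponential decay of `f (x + y * I)` as `x → ∞`, uniformly in `y ∈ s`; the bound is required on
the whole half-strip `0 ≤ x`, so that it also dominates the integrals along horizontal rays. -/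
def HasExpDecayOn (s : Set ℝ) (f : ℂ → ℂ) : Prop :=
  ∃ C c : ℝ, 0 < c ∧ ∀ x : ℝ, 0 ≤ x → ∀ y ∈ s, ‖f (x + y * I)‖ ≤ C * Real.exp (-c * x)

namespace HasExpDecayOn

variable {s t : Set ℝ} {f : ℂ → ℂ} {y : ℝ}

lemma mono (hf : HasExpDecayOn s f) (hts : t ⊆ s) : HasExpDecayOn t f := by
  obtain ⟨C, c, hc, hfC⟩ := hf
  exact ⟨C, c, hc, fun x hx y hy ↦ hfC x hx y (hts hy)⟩

lemma exists_norm_le (hf : HasExpDecayOn s f) :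
    ∃ b : ℝ → ℝ, IntegrableOn b (Ioi 0) ∧ Tendsto b atTop (𝓝 0) ∧
      ∀ x : ℝ, 0 ≤ x → ∀ y ∈ s, ‖f (x + y * I)‖ ≤ b x := by
  obtain ⟨C, c, hc, hfC⟩ := hf
  refine ⟨fun x ↦ C * Real.exp (-c * x), (exp_neg_integrableOn_Ioi 0 hc).const_mul C, ?_, hfC⟩
  simpa using (Real.tendsto_exp_atBot.comp
    (tendsto_id.const_mul_atTop_of_neg (neg_neg_of_pos hc))).const_mul C

lemma integrableOn_Ioi (hf : HasExpDecayOn s f) (hcont : Continuous f) (hy : y ∈ s) :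
    IntegrableOn (fun x : ℝ ↦ f (x + y * I)) (Ioi 0) := by
  obtain ⟨b, hb, -, hfb⟩ := hf.exists_norm_le
  refine Integrable.mono' hb (by fun_prop) ?_
  exact (ae_restrict_mem measurableSet_Ioi).mono fun x hx ↦ hfb x (le_of_lt hx) y hy

lemma tendsto_zero (hf : HasExpDecayOn s f) (hy : y ∈ s) :
    Tendsto (fun x : ℝ ↦ f (x + y * I)) atTop (𝓝 0) := by
  obtain ⟨b, -, hb, hfb⟩ := hf.exists_norm_le
  refine squeeze_zero_norm' ?_ hb
  filter_upwards [eventually_ge_atTop 0] with x hx using hfb x hx y hy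

lemma tendsto_intervalIntegral_zero {a b : ℝ} (hab : a ≤ b) (hf : HasExpDecayOn (Icc a b) f) :
    Tendsto (fun x : ℝ ↦ ∫ y in a..b, f (x + y * I)) atTop (𝓝 0) := by
  obtain ⟨B, -, hB, hfB⟩ := hf.exists_norm_le
  refine squeeze_zero_norm' ?_ (by simpa using hB.mul_const |b - a|)
  filter_upwards [eventually_ge_atTop 0] with x hx
  refine intervalIntegral.norm_integral_le_of_norm_le_const fun y hy ↦ hfB x hx y ?_
  exact Ioc_subset_Icc_self (uIoc_of_le hab ▸ hy)

end HasExpDecayOn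

lemma pow_le_factorial_div_pow_mul_exp {δ r : ℝ} (hδ : 0 < δ) (hr : 0 ≤ r) (n : ℕ) :
    r ^ n ≤ n.factorial / δ ^ n * Real.exp (δ * r) := by
  have h := Real.pow_div_factorial_le_exp (δ * r) (by positivity) n
  rw [mul_pow, div_le_iff₀ (by positivity)] at h
  rw [div_mul_eq_mul_div, le_div_iff₀ (by positivity)]
  linarith

lemma exists_norm_eval_le_mul_exp (p : ℂ[X]) {δ : ℝ} (hδ : 0 < δ) :
    ∃ C : ℝ, ∀ z : ℂ, ‖p.eval z‖ ≤ C * Real.exp (δ * ‖z‖) := by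
  induction p using Polynomial.induction_on' with
  | add p q hp hq =>
    obtain ⟨C, hC⟩ := hp
    obtain ⟨D, hD⟩ := hq
    refine ⟨C + D, fun z ↦ ?_⟩
    rw [eval_add, add_mul]
    exact (norm_add_le _ _).trans (add_le_add (hC z) (hD z))
  | monomial n a =>
    refine ⟨‖a‖ * (n.factorial / δ ^ n), fun z ↦ ?_⟩
    rw [eval_monomial, norm_mul, norm_pow, mul_assoc]
    gcongr
    exact pow_le_factorial_div_pow_mul_exp hδ (norm_nonneg z) n

lemma HasExpDecayOn.polynomial_mul {s : Set ℝ} {f : ℂ → ℂ} (hf : HasExpDecayOn s f)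
    (hs : Bornology.IsBounded s) (p : ℂ[X]) : HasExpDecayOn s (fun z ↦ p.eval z * f z) := by
  obtain ⟨C, c, hc, hfC⟩ := hf
  obtain ⟨D, hD⟩ := exists_norm_eval_le_mul_exp p (half_pos hc)
  obtain ⟨r, hr⟩ := hs.exists_norm_le
  have hD_nonneg : 0 ≤ D := by simpa using (norm_nonneg _).trans (hD 0)
  refine ⟨D * Real.exp (c / 2 * r) * C, c / 2, half_pos hc, fun x hx y hy ↦ ?_⟩
  have hz : ‖(x + y * I : ℂ)‖ ≤ x + r := by
    refine (norm_add_le _ _).trans ?_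
    simpa [abs_of_nonneg hx] using hr y hy
  calc ‖p.eval (x + y * I : ℂ) * f (x + y * I)‖
      ≤ D * Real.exp (c / 2 * (x + r)) * (C * Real.exp (-c * x)) := by
        rw [norm_mul]
        gcongr
        · exact (hD _).trans (by gcongr)
        · exact hfC x hx y hy
    _ = D * Real.exp (c / 2 * r) * C * (Real.exp (c / 2 * x) * Real.exp (-c * x)) := by
        rw [mul_add, Real.exp_add]; ring
    _ = D * Real.exp (c / 2 * r) * C * Real.exp (-(c / 2) * x) := by
        rw [← Real.exp_add]; ring_nf

end ExponentialDecay

section HookIntegral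

open Complex Filter Topology

/-- The integral of `f` along the path from `0` up to `h * I` and then along the horizontal ray to
`h * I + ∞`. -/
noncomputable def hookIntegral (h : ℝ) (f : ℂ → ℂ) : ℂ :=
  I * (∫ y in (0 : ℝ)..h, f (y * I)) + ∫ x in Ioi (0 : ℝ), f (x + h * I)

variable {h : ℝ} {f g F : ℂ → ℂ}

lemma hookIntegral_const_mul (c : ℂ) :
    hookIntegral h (fun z ↦ c * f z) = c * hookIntegral h f := by
  simp only [hookIntegral, intervalIntegral.integral_const_mul, integral_const_mul]
  ring

lemma hookIntegral_add (hf : Continuous f) (hg : Continuous g) (hfd : HasExpDecayOn {h} f)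
    (hgd : HasExpDecayOn {h} g) :
    hookIntegral h (fun z ↦ f z + g z) = hookIntegral h f + hookIntegral h g := by
  have hvert : ∀ {u : ℂ → ℂ}, Continuous u →
      IntervalIntegrable (fun y : ℝ ↦ u (y * I)) volume 0 h :=
    fun hu ↦ Continuous.intervalIntegrable (by fun_prop) _ _
  rw [hookIntegral, hookIntegral, hookIntegral, intervalIntegral.integral_add (hvert hf) (hvert hg),
    integral_add (hfd.integrableOn_Ioi hf rfl) (hgd.integrableOn_Ioi hg rfl)]
  ring

lemma integral_Ioi_eq_hookIntegral (hh : 0 ≤ h) (hf : Differentiable ℂ f)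
    (hfd : HasExpDecayOn (Icc 0 h) f) : ∫ x in Ioi (0 : ℝ), f x = hookIntegral h f := by
  have hrect : ∀ R : ℝ, (∫ x in (0 : ℝ)..R, f x) - (∫ x in (0 : ℝ)..R, f (x + h * I))
      + I * (∫ y in (0 : ℝ)..h, f (R + y * I)) = I * ∫ y in (0 : ℝ)..h, f (y * I) := by
    intro R
    have := integral_boundary_rect_eq_zero_of_differentiableOn f 0 (R + h * I) hf.differentiableOn
    simp only [zero_re, zero_im, add_re, add_im, ofReal_re, ofReal_im, re_ofReal_mul, I_re,
      im_ofReal_mul, I_im, ofReal_zero, zero_mul, mul_zero, mul_one, add_zero, zero_add,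
      smul_eq_mul] at this
    linear_combination this
  have hbottom : Tendsto (fun R : ℝ ↦ ∫ x in (0 : ℝ)..R, f x) atTop (𝓝 (∫ x in Ioi (0 : ℝ), f x)) :=
    intervalIntegral_tendsto_integral_Ioi 0
      (by simpa using hfd.integrableOn_Ioi hf.continuous (left_mem_Icc.2 hh)) tendsto_id
  have htop := intervalIntegral_tendsto_integral_Ioi 0
    (hfd.integrableOn_Ioi hf.continuous (right_mem_Icc.2 hh)) tendsto_id
  have hright := (hfd.tendsto_intervalIntegral_zero hh).const_mul I
  have := tendsto_nhds_unique (((hbottom.sub htop).add hright).congr hrect) tendsto_const_nhds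
  rw [hookIntegral]
  linear_combination this

lemma hookIntegral_of_hasDerivAt (hF : ∀ z, HasDerivAt F (f z) z) (hf : Continuous f)
    (hFd : HasExpDecayOn {h} F) (hfd : HasExpDecayOn {h} f) : hookIntegral h f = -F 0 := by
  have hvert : I * ∫ y in (0 : ℝ)..h, f (y * I) = F (h * I) - F 0 := by
    have hderiv : ∀ y ∈ uIcc 0 h, HasDerivAt (fun y : ℝ ↦ F (y * I)) (I * f (y * I)) y := by
      intro y _
      have hmul : HasDerivAt (fun z : ℂ ↦ z * I) I y := by
        simpa using (hasDerivAt_id (y : ℂ)).mul_const I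
      simpa [mul_comm] using ((hF (y * I)).comp (y : ℂ) hmul).comp_ofReal
    have hftc := intervalIntegral.integral_eq_sub_of_hasDerivAt hderiv
      (Continuous.intervalIntegrable (by fun_prop) _ _)
    simpa [intervalIntegral.integral_const_mul] using hftc
  have htop : ∫ x in Ioi (0 : ℝ), f (x + h * I) = 0 - F (h * I) := by
    have hderiv : ∀ x ∈ Ici (0 : ℝ),
        HasDerivAt (fun x : ℝ ↦ F (x + h * I)) (f (x + h * I)) x :=
      fun x _ ↦ ((hF (x + h * I)).comp_add_const (x : ℂ) (h * I)).comp_ofReal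
    simpa using integral_Ioi_of_hasDerivAt_of_tendsto' hderiv (hfd.integrableOn_Ioi hf rfl)
      (hFd.tendsto_zero rfl)
  rw [hookIntegral, hvert, htop]
  ring

end HookIntegral

section GaussianMoments

open Complex Filter Topology Polynomial

variable {h : ℝ} {b : ℂ}

lemma hasExpDecayOn_strip_cexp_neg_mul_sq (hb : 0 < b.re) (hb' : b.im ≤ 0) :
    HasExpDecayOn (Icc 0 h) fun z ↦ cexp (-b * z ^ 2) := by
  refine ⟨Real.exp (b.re * (h ^ 2 + 1)), b.re, hb, fun x hx y hy ↦ ?_⟩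
  rw [GaussianFourier.norm_cexp_neg_mul_sq_add_mul_I, ← Real.exp_add, Real.exp_le_exp]
  have hsq : y ^ 2 - x ^ 2 ≤ h ^ 2 + 1 - x := by nlinarith [hy.1, hy.2, sq_nonneg (x - 1)]
  have him : b.im * y * x ≤ 0 :=
    mul_nonpos_of_nonpos_of_nonneg (mul_nonpos_of_nonpos_of_nonneg hb' hy.1) hx
  nlinarith [mul_le_mul_of_nonneg_left hsq hb.le]

lemma norm_cexp_neg_mul_sq_le_of_re_nonneg (hb : 0 ≤ b.re) (x : ℝ) :
    ‖cexp (-b * (x + h * I) ^ 2)‖ ≤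
      Real.exp (b.re * h ^ 2) * Real.exp (2 * b.im * h * x) := by
  rw [GaussianFourier.norm_cexp_neg_mul_sq_add_mul_I, ← Real.exp_add, Real.exp_le_exp]
  nlinarith [mul_nonneg hb (sq_nonneg x)]

lemma hasExpDecayOn_ray_cexp_neg_mul_sq (hh : 0 < h) (hb : 0 ≤ b.re) (hb' : b.im < 0) :
    HasExpDecayOn {h} fun z ↦ cexp (-b * z ^ 2) := by
  refine ⟨Real.exp (b.re * h ^ 2), -(2 * b.im * h), by nlinarith, fun x _ y hy ↦ ?_⟩
  rw [mem_singleton_iff.1 hy, neg_neg]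
  exact norm_cexp_neg_mul_sq_le_of_re_nonneg hb x

lemma tendsto_hookIntegral_cexp_neg_mul_sq (hh : 0 < h) (hb : 0 ≤ b.re) (hb' : b.im < 0) :
    Tendsto (fun ε : ℝ ↦ hookIntegral h fun z ↦ cexp (-(b + ε) * z ^ 2)) (𝓝[>] 0)
      (𝓝 (hookIntegral h fun z ↦ cexp (-b * z ^ 2))) := by
  have hvert : Continuous fun ε : ℝ ↦ ∫ y in (0 : ℝ)..h, cexp (-(b + ε) * (y * I) ^ 2) :=
    intervalIntegral.continuous_parametric_intervalIntegral_of_continuous' (by fun_prop) _ _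
  have hvert_zero := (hvert.tendsto 0).mono_left (nhdsWithin_le_nhds (s := Ioi 0))
  have htop : Tendsto (fun ε : ℝ ↦ ∫ x in Ioi (0 : ℝ), cexp (-(b + ε) * (x + h * I) ^ 2)) (𝓝[>] 0)
      (𝓝 (∫ x in Ioi (0 : ℝ), cexp (-b * (x + h * I) ^ 2))) := by
    refine tendsto_integral_filter_of_dominated_convergence
      (fun x ↦ Real.exp ((b.re + 1) * h ^ 2) * Real.exp (2 * b.im * h * x))
      (Eventually.of_forall fun ε ↦ by fun_prop) ?_
      ((integrableOn_exp_mul_Ioi (by nlinarith) 0).const_mul _) ?_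
    · filter_upwards [Ioc_mem_nhdsGT one_pos] with ε hε
      refine ae_of_all _ fun x ↦ (norm_cexp_neg_mul_sq_le_of_re_nonneg ?_ x).trans ?_
      · simpa using add_nonneg hb hε.1.le
      · simp only [add_re, ofReal_re, add_im, ofReal_im, add_zero]
        gcongr
        exact hε.2
    · refine ae_of_all _ fun x ↦ ?_
      have hcont : Continuous fun ε : ℝ ↦ cexp (-(b + ε) * (x + h * I) ^ 2) := by fun_prop
      simpa using (hcont.tendsto 0).mono_left (nhdsWithin_le_nhds (s := Ioi 0))
  simpa [hookIntegral] using (hvert_zero.const_mul I).add htop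

lemma hookIntegral_cexp_neg_mul_sq (hh : 0 < h) (hb : 0 ≤ b.re) (hb' : b.im < 0) :
    hookIntegral h (fun z ↦ cexp (-b * z ^ 2)) = (π / b) ^ (1 / 2 : ℂ) / 2 := by
  have hreg : ∀ ε : ℝ, 0 < ε → hookIntegral h (fun z ↦ cexp (-(b + ε) * z ^ 2)) =
      (π / (b + ε)) ^ (1 / 2 : ℂ) / 2 := by
    intro ε hε
    have hre : 0 < (b + ε).re := by simpa using add_pos_of_nonneg_of_pos hb hε
    rw [← integral_gaussian_complex_Ioi hre]
    refine (integral_Ioi_eq_hookIntegral hh.le (by fun_prop) ?_).symm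
    exact hasExpDecayOn_strip_cexp_neg_mul_sq hre (by simpa using hb'.le)
  have hb0 : b ≠ 0 := fun h0 ↦ by simp [h0] at hb'
  have hslit : (π / b : ℂ) ∈ slitPlane := by
    refine Or.inr ?_
    have him : (π / b : ℂ).im = -(π * b.im / normSq b) := by simp [div_im]
    rw [him, neg_ne_zero]
    exact div_ne_zero (mul_ne_zero pi_ne_zero hb'.ne) (normSq_pos.2 hb0).ne'
  have hcont : ContinuousAt (fun ε : ℝ ↦ ((π : ℂ) / (b + ε)) ^ (1 / 2 : ℂ) / 2) 0 := by
    refine ContinuousAt.div_const (ContinuousAt.cpow ?_ continuousAt_const (by simpa using hslit)) _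
    exact ContinuousAt.div continuousAt_const (by fun_prop) (by simpa using hb0)
  have hlim := hcont.tendsto.mono_left (nhdsWithin_le_nhds (s := Ioi 0))
  simp only [ofReal_zero, add_zero] at hlim
  refine tendsto_nhds_unique (tendsto_hookIntegral_cexp_neg_mul_sq hh hb hb') (hlim.congr' ?_)
  filter_upwards [self_mem_nhdsWithin] with ε hε using (hreg ε hε).symm

lemma hookIntegral_polynomial_mul_cexp_neg_mul_sq (hh : 0 < h) (hb : 0 ≤ b.re) (hb' : b.im < 0)
    (q : ℂ[X]) (c : ℂ) :
    hookIntegral h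
        (fun z ↦ (derivative q - C (2 * b) * X * q + C c).eval z * cexp (-b * z ^ 2)) =
      c * ((π / b) ^ (1 / 2 : ℂ) / 2) - q.eval 0 := by
  set r : ℂ[X] := derivative q - C (2 * b) * X * q with hr
  have hgauss := hasExpDecayOn_ray_cexp_neg_mul_sq hh hb hb'
  have hdecay : ∀ p : ℂ[X], HasExpDecayOn {h} fun z ↦ p.eval z * cexp (-b * z ^ 2) :=
    hgauss.polynomial_mul Bornology.isBounded_singleton
  have hderiv : ∀ z, HasDerivAt (fun z ↦ q.eval z * cexp (-b * z ^ 2))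
      (r.eval z * cexp (-b * z ^ 2)) z := by
    intro z
    refine ((q.hasDerivAt z).mul ((hasDerivAt_pow 2 z).const_mul (-b)).cexp).congr_deriv ?_
    simp only [hr, eval_sub, eval_mul, eval_C, eval_X, Nat.cast_ofNat, Nat.add_one_sub_one]
    ring
  have hexact : hookIntegral h (fun z ↦ r.eval z * cexp (-b * z ^ 2)) = -q.eval 0 := by
    simpa using hookIntegral_of_hasDerivAt hderiv (by fun_prop) (hdecay q) (hdecay r)
  calc hookIntegral h (fun z ↦ (r + C c).eval z * cexp (-b * z ^ 2))
      = hookIntegral h (fun z ↦ r.eval z * cexp (-b * z ^ 2) + c * cexp (-b * z ^ 2)) := by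
        simp only [eval_add, eval_C, add_mul]
    _ = hookIntegral h (fun z ↦ r.eval z * cexp (-b * z ^ 2)) +
          c * hookIntegral h (fun z ↦ cexp (-b * z ^ 2)) := by
        rw [hookIntegral_add (by fun_prop) (by fun_prop) (hdecay r)
          (by simpa using hdecay (C c)), hookIntegral_const_mul]
    _ = c * ((π / b) ^ (1 / 2 : ℂ) / 2) - q.eval 0 := by
        rw [hexact, hookIntegral_cexp_neg_mul_sq hh hb hb']
        ring

end GaussianMoments

section GeometricSeries

open Polynomial

variable {a : ℝ}

lemma mul_exp_half_le_exp_sub_one {u : ℝ} (hu : 0 ≤ u) :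
    u * Real.exp (u / 2) ≤ Real.exp u - 1 := by
  have hsinh : u / 2 ≤ (Real.exp (u / 2) - Real.exp (-(u / 2))) / 2 := by
    rw [← Real.sinh_eq]
    exact Real.self_le_sinh_iff.2 (by linarith)
  calc u * Real.exp (u / 2)
      ≤ (Real.exp (u / 2) - Real.exp (-(u / 2))) * Real.exp (u / 2) := by
        gcongr
        linarith
    _ = Real.exp u - 1 := by
        rw [sub_mul, ← Real.exp_add, ← Real.exp_add, add_halves, neg_add_cancel, Real.exp_zero]

lemma integrableOn_eval_mul_div_exp_sub_one (ha : 0 < a) {p : ℂ[X]} (hp : p.eval 0 = 0)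
    {u : ℝ → ℂ} (hu : Continuous u) (hu_norm : ∀ t, ‖u t‖ ≤ 1) :
    IntegrableOn (fun t : ℝ ↦ p.eval (t : ℂ) * u t / (Real.exp (a * t) - 1 : ℝ)) (Ioi 0) := by
  obtain ⟨q, hpq⟩ : X ∣ p := X_dvd_iff.2 (by rwa [p.coeff_zero_eq_eval_zero])
  obtain ⟨C, hC⟩ := exists_norm_eval_le_mul_exp q (δ := a / 4) (by positivity)
  refine Integrable.mono' ((exp_neg_integrableOn_Ioi 0 (b := a / 4) (by positivity)).const_mul
    (C / a)) (Measurable.aestronglyMeasurable (by fun_prop)) ?_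
  filter_upwards [ae_restrict_mem measurableSet_Ioi] with t (ht : 0 < t)
  have hexp := mul_exp_half_le_exp_sub_one (mul_pos ha ht).le
  have hq : ‖q.eval (t : ℂ)‖ ≤ C * Real.exp (a / 4 * t) := by
    simpa [abs_of_pos ht] using hC t
  calc ‖p.eval (t : ℂ) * u t / (Real.exp (a * t) - 1 : ℝ)‖
      = t * ‖q.eval (t : ℂ)‖ * ‖u t‖ / |Real.exp (a * t) - 1| := by
        rw [hpq, norm_div, norm_mul, eval_mul, norm_mul, eval_X, Complex.norm_real,
          Complex.norm_real, Real.norm_of_nonneg ht.le, Real.norm_eq_abs]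
    _ ≤ t * (C * Real.exp (a / 4 * t)) * 1 / (a * t * Real.exp (a * t / 2)) := by
        have hbound := mul_nonneg ht.le ((norm_nonneg _).trans hq)
        gcongr
        · exact hu_norm t
        · exact hexp.trans (le_abs_self _)
    _ = C / a * (Real.exp (a / 4 * t) / Real.exp (a * t / 2)) := by
        field_simp
    _ = C / a * Real.exp (-(a / 4) * t) := by
        rw [← Real.exp_sub]
        ring_nf

lemma hasSum_exp_neg_add_one_mul {u : ℝ} (hu : 0 < u) :
    HasSum (fun n : ℕ ↦ Real.exp (-((n + 1) * u))) (Real.exp u - 1)⁻¹ := by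
  have hlt : Real.exp (-u) < 1 := Real.exp_lt_one_iff.2 (neg_lt_zero.2 hu)
  have hterm : ∀ n : ℕ, Real.exp (-((n + 1) * u)) = Real.exp (-u) * Real.exp (-u) ^ n := by
    intro n
    rw [← Real.exp_nat_mul, ← Real.exp_add]
    ring_nf
  have hvalue : (Real.exp u - 1)⁻¹ = Real.exp (-u) * (1 - Real.exp (-u))⁻¹ := by
    rw [Real.exp_neg]
    field_simp
  simp only [hterm, hvalue]
  exact (hasSum_geometric_of_lt_one (Real.exp_pos _).le hlt).mul_left _

lemma hasSum_integral_mul_exp_neg (ha : 0 < a) {g : ℝ → ℂ}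
    (hg : IntegrableOn (fun t ↦ g t / (Real.exp (a * t) - 1 : ℝ)) (Ioi 0)) :
    HasSum (fun n : ℕ ↦ ∫ t in Ioi 0, g t * Real.exp (-((n + 1) * (a * t))))
      (∫ t in Ioi 0, g t / (Real.exp (a * t) - 1 : ℝ)) := by
  have hgeom : ∀ᵐ t ∂volume.restrict (Ioi (0 : ℝ)),
      HasSum (fun n : ℕ ↦ Real.exp (-((n + 1) * (a * t)))) (Real.exp (a * t) - 1)⁻¹ := by
    filter_upwards [ae_restrict_mem measurableSet_Ioi] with t (ht : 0 < t)
    exact hasSum_exp_neg_add_one_mul (mul_pos ha ht)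
  have hgm : AEStronglyMeasurable g (volume.restrict (Ioi 0)) := by
    refine (hg.aestronglyMeasurable.mul (g := fun t ↦ ((Real.exp (a * t) - 1 : ℝ) : ℂ))
      (Continuous.aestronglyMeasurable (by fun_prop))).congr ?_
    filter_upwards [ae_restrict_mem measurableSet_Ioi] with t (ht : 0 < t)
    have hne : Real.exp (a * t) - 1 ≠ 0 := (sub_pos.2 (one_lt_exp_iff.2 (mul_pos ha ht))).ne'
    exact div_mul_cancel₀ _ (Complex.ofReal_ne_zero.2 hne)
  refine hasSum_integral_of_dominated_convergence
    (fun (n : ℕ) t ↦ ‖g t‖ * Real.exp (-((n + 1) * (a * t)))) (fun n ↦ ?_) (fun n ↦ ?_) ?_ ?_ ?_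
  · exact hgm.mul (Continuous.aestronglyMeasurable (by fun_prop))
  · refine ae_of_all _ fun t ↦ ?_
    rw [norm_mul, Complex.norm_real, Real.norm_of_nonneg (Real.exp_pos _).le]
  · filter_upwards [hgeom] with t ht using ht.summable.mul_left _
  · refine hg.norm.congr ?_
    filter_upwards [hgeom] with t ht
    have hnonneg : 0 ≤ (Real.exp (a * t) - 1)⁻¹ := ht.nonneg fun n ↦ (Real.exp_pos _).le
    rw [(ht.mul_left _).tsum_eq, div_eq_mul_inv, norm_mul, ← Complex.ofReal_inv,
      Complex.norm_of_nonneg hnonneg]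
  · filter_upwards [hgeom] with t ht
    rw [div_eq_mul_inv, ← Complex.ofReal_inv]
    exact (Complex.hasSum_ofReal.2 ht).mul_left _

end GeometricSeries

section Poisson

open Complex Filter FourierTransform

lemma tsum_intervalIntegral_mul_cexp {w : ℝ → ℂ} {a b : ℤ} (hab : a ≤ b)
    (hw : ContinuousOn w (Icc a b)) (hwa : w a = 0) (hwb : w b = 0)
    (hs : Summable fun n : ℤ ↦ ∫ y in (a : ℝ)..b, w y * cexp (-(2 * π * I * n * y))) :
    ∑' n : ℤ, ∫ y in (a : ℝ)..b, w y * cexp (-(2 * π * I * n * y)) =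
      ∑ j ∈ Finset.Icc a b, w j := by
  have habR : (a : ℝ) ≤ b := Int.cast_le.2 hab
  set f : ℝ → ℂ := indicator (Icc a b) w with hf
  have hcont : Continuous f := by
    refine continuous_indicator ?_ (by rwa [isClosed_Icc.closure_eq])
    rw [frontier_Icc habR]
    rintro y (rfl | rfl) <;> assumption
  have hfourier : ∀ n : ℤ, 𝓕 f n = ∫ y in (a : ℝ)..b, w y * cexp (-(2 * π * I * n * y)) := by
    intro n
    rw [Real.fourier_real_eq_integral_exp_smul, intervalIntegral.integral_of_le habR,
      ← integral_Icc_eq_integral_Ioc, ← integral_indicator measurableSet_Icc]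
    refine integral_congr_ae (ae_of_all _ fun y ↦ ?_)
    by_cases hy : y ∈ Icc (a : ℝ) b
    · simp only [hf, indicator_of_mem hy, smul_eq_mul]
      rw [mul_comm]
      push_cast
      ring_nf
    · simp only [hf, indicator_of_notMem hy, smul_zero]
  have hdecay : f =O[cocompact ℝ] fun x : ℝ ↦ |x| ^ (-2 : ℝ) := by
    have hzero : f =ᶠ[cocompact ℝ] fun _ ↦ 0 := by
      filter_upwards [isCompact_Icc.compl_mem_cocompact] with y hy
        using indicator_of_notMem hy w
    exact hzero.trans_isBigO (Asymptotics.isBigO_zero _ _)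
  have hpoisson := Real.tsum_eq_tsum_fourier_of_rpow_decay_of_summable hcont one_lt_two hdecay
    (by simpa only [hfourier] using hs) 0
  simp only [hfourier, zero_add, QuotientAddGroup.mk_zero, fourier_eval_zero, mul_one] at hpoisson
  rw [← hpoisson, tsum_eq_sum (s := Finset.Icc a b)]
  · refine Finset.sum_congr rfl fun j hj ↦ indicator_of_mem ?_ w
    simpa using hj
  · intro j hj
    refine indicator_of_notMem ?_ w
    simpa using hj

end Poisson

section TwistedGaussian

open Complex Polynomial

/-- The kernel `exp (π i z² / 2) * exp (-2 π k z)`: for real `z` these are the terms of the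
geometric series of `exp (π i z² / 2) / (exp (2 π z) - 1)`, and translation by `2 * I` shifts the
index `k`. -/
noncomputable def twistedGaussian (k : ℤ) (z : ℂ) : ℂ :=
  cexp (π * I * z ^ 2 / 2 - 2 * π * k * z)

variable {k : ℤ}

@[fun_prop]
lemma differentiable_twistedGaussian : Differentiable ℂ (twistedGaussian k) := by
  unfold twistedGaussian
  fun_prop

@[fun_prop]
lemma continuous_twistedGaussian : Continuous (twistedGaussian k) :=
  differentiable_twistedGaussian.continuous

lemma twistedGaussian_zero (z : ℂ) : twistedGaussian 0 z = cexp (-(-(π / 2 * I)) * z ^ 2) := by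
  rw [twistedGaussian]
  push_cast
  ring_nf

lemma twistedGaussian_eq_mul (k : ℤ) (z : ℂ) :
    twistedGaussian k z = twistedGaussian 0 z * cexp (-(2 * π * k * z)) := by
  rw [twistedGaussian, twistedGaussian, ← Complex.exp_add]
  push_cast
  ring_nf

lemma twistedGaussian_add_two_mul_I (k : ℤ) (z : ℂ) :
    twistedGaussian k (z + 2 * I) = twistedGaussian (k + 1) z := by
  rw [twistedGaussian, twistedGaussian, Complex.exp_eq_exp_iff_exists_int]
  refine ⟨-1 - 2 * k, ?_⟩
  push_cast
  linear_combination 2 * π * (z + I) * I_sq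

lemma twistedGaussian_two_mul_I_sub (k : ℤ) (z : ℂ) :
    twistedGaussian k (2 * I - z) = twistedGaussian (-(k + 1)) z := by
  have hneg : ∀ (j : ℤ) (w : ℂ), twistedGaussian j (-w) = twistedGaussian (-j) w := by
    intro j w
    simp only [twistedGaussian]
    push_cast
    ring_nf
  rw [← neg_add_eq_sub, twistedGaussian_add_two_mul_I, hneg]

lemma norm_twistedGaussian (k : ℤ) (x y : ℝ) :
    ‖twistedGaussian k (x + y * I)‖ = Real.exp (-(π * (y + 2 * k) * x)) := by
  rw [twistedGaussian, Complex.norm_exp]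
  congr 1
  simp only [sq, sub_re, add_re, mul_re, div_ofNat_re, add_im, mul_im, ofReal_re, ofReal_im, I_re,
    I_im, intCast_re, intCast_im, re_ofNat, im_ofNat]
  ring

lemma norm_twistedGaussian_zero_ofReal (x : ℝ) : ‖twistedGaussian 0 x‖ = 1 := by
  simpa using norm_twistedGaussian 0 x 0

lemma twistedGaussian_add_one_ofReal (n : ℕ) (x : ℝ) :
    twistedGaussian (n + 1) x = twistedGaussian 0 x * Real.exp (-((n + 1) * (2 * π * x))) := by
  rw [twistedGaussian_eq_mul]
  push_cast
  ring_nf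

lemma hasExpDecayOn_twistedGaussian {y₀ : ℝ} (hy₀ : 0 < y₀ + 2 * k) :
    HasExpDecayOn (Ici y₀) (twistedGaussian k) := by
  refine ⟨1, π * (y₀ + 2 * k), by positivity, fun x hx y hy ↦ ?_⟩
  rw [norm_twistedGaussian, one_mul, Real.exp_le_exp, ← neg_mul]
  gcongr
  exact hy

/-- The integral of `p * twistedGaussian k` along the segment from `0` to `2 * I`. -/
noncomputable def segmentIntegral (p : ℂ[X]) (k : ℤ) : ℂ :=
  I * ∫ y in (0 : ℝ)..2, p.eval (y * I) * twistedGaussian k (y * I)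

variable {p : ℂ[X]}

lemma segmentIntegral_neg_add_one (hp : ∀ z, p.eval (2 * I - z) = p.eval z) (k : ℤ) :
    segmentIntegral p (-(k + 1)) = segmentIntegral p k := by
  rw [segmentIntegral, segmentIntegral]
  congr 1
  have hreflect := intervalIntegral.integral_comp_sub_left (a := 0) (b := 2)
    (fun y : ℝ ↦ p.eval (y * I) * twistedGaussian k (y * I)) 2
  rw [sub_self, sub_zero] at hreflect
  rw [← hreflect]
  refine intervalIntegral.integral_congr fun y _ ↦ ?_
  have hy : ((2 - y : ℝ) : ℂ) * I = 2 * I - y * I := by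
    push_cast
    ring
  rw [hy, hp, twistedGaussian_two_mul_I_sub]

lemma tsum_segmentIntegral (hp0 : p.eval 0 = 0) (hp2 : p.eval (2 * I) = 0)
    (hs : Summable (segmentIntegral p)) : ∑' k : ℤ, segmentIntegral p k = p.eval I := by
  set w : ℝ → ℂ := fun y ↦ I * (p.eval (y * I) * twistedGaussian 0 (y * I)) with hw
  have hseg : ∀ k : ℤ, segmentIntegral p k =
      ∫ y in ((0 : ℤ) : ℝ)..(2 : ℤ), w y * cexp (-(2 * π * I * k * y)) := by
    intro k
    rw [segmentIntegral, ← intervalIntegral.integral_const_mul]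
    push_cast
    refine intervalIntegral.integral_congr fun y _ ↦ ?_
    simp only [hw]
    rw [twistedGaussian_eq_mul]
    ring_nf
  have hw1 : w 1 = p.eval I := by
    have hgauss : twistedGaussian 0 I = -I := by
      rw [twistedGaussian_zero, I_sq]
      simp [Complex.exp_neg, exp_pi_div_two_mul_I]
    simp only [hw, ofReal_one, one_mul, hgauss]
    linear_combination -p.eval I * I_sq
  rw [funext hseg] at hs ⊢
  rw [tsum_intervalIntegral_mul_cexp zero_le_two (by fun_prop) (by simp [hw, hp0])
    (by simp [hw, hp2]) hs, ← hw1, Finset.sum_eq_single 1]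
  · simp
  · intro j hj hj1
    obtain rfl | rfl : j = 0 ∨ j = 2 := by
      rw [Finset.mem_Icc] at hj
      omega
    · simp [hw, hp0]
    · simp [hw, hp2]
  · simp

lemma integral_sub_shift_mul_twistedGaussian (p : ℂ[X]) (n : ℕ) :
    ∫ t in Ioi (0 : ℝ), (p.eval (t : ℂ) - p.eval (t + 2 * I)) * twistedGaussian (n + 1) t =
      (∫ t in Ioi (0 : ℝ), p.eval (t : ℂ) * twistedGaussian (n + 1) t) -
        hookIntegral 2 (fun z ↦ p.eval z * twistedGaussian n z) + segmentIntegral p n := by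
  have hdecay : HasExpDecayOn {0} fun z ↦ p.eval z * twistedGaussian (n + 1) z :=
    ((hasExpDecayOn_twistedGaussian (y₀ := 0) (by push_cast; positivity)).mono
      (by simp)).polynomial_mul Bornology.isBounded_singleton p
  have hdecay' : HasExpDecayOn {2} fun z ↦ p.eval z * twistedGaussian n z :=
    ((hasExpDecayOn_twistedGaussian (y₀ := 2) (by push_cast; positivity)).mono
      (by simp)).polynomial_mul Bornology.isBounded_singleton p
  have hint := hdecay.integrableOn_Ioi (by fun_prop) rfl
  have hint' := hdecay'.integrableOn_Ioi (by fun_prop) rfl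
  simp only [ofReal_zero, zero_mul, add_zero] at hint
  simp only [ofReal_ofNat, twistedGaussian_add_two_mul_I] at hint'
  simp only [sub_mul]
  rw [integral_sub hint hint', hookIntegral, segmentIntegral]
  simp only [ofReal_ofNat, twistedGaussian_add_two_mul_I]
  ring

lemma hasSum_integral_mul_twistedGaussian (hp : p.eval 0 = 0) :
    HasSum (fun n : ℕ ↦ ∫ t in Ioi (0 : ℝ), p.eval (t : ℂ) * twistedGaussian (n + 1) t)
      (∫ t in Ioi (0 : ℝ), p.eval (t : ℂ) * twistedGaussian 0 t /
        (Real.exp (2 * π * t) - 1 : ℝ)) := by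
  simp only [twistedGaussian_add_one_ofReal, ← mul_assoc _ (twistedGaussian 0 _)]
  refine hasSum_integral_mul_exp_neg (g := fun t : ℝ ↦ p.eval (t : ℂ) * twistedGaussian 0 t)
    two_pi_pos ?_
  exact integrableOn_eval_mul_div_exp_sub_one two_pi_pos hp (by fun_prop)
    fun t ↦ (norm_twistedGaussian_zero_ofReal t).le

lemma hasSum_segmentIntegral (hp0 : p.eval 0 = 0) (hp2 : p.eval (2 * I) = 0) :
    HasSum (fun n : ℕ ↦ segmentIntegral p n)
      ((∫ t in Ioi (0 : ℝ), (p.eval (t : ℂ) - p.eval (t + 2 * I)) * twistedGaussian 0 t /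
          (Real.exp (2 * π * t) - 1 : ℝ)) +
        hookIntegral 2 (fun z ↦ p.eval z * twistedGaussian 0 z)) := by
  set hook : ℕ → ℂ := fun n ↦ hookIntegral 2 (fun z ↦ p.eval z * twistedGaussian n z) with hhook
  have hhook_zero : hook 0 = hookIntegral 2 (fun z ↦ p.eval z * twistedGaussian 0 z) := by
    simp only [hhook, Nat.cast_zero]
  have hhook_succ : ∀ n : ℕ,
      ∫ t in Ioi (0 : ℝ), p.eval (t : ℂ) * twistedGaussian (n + 1) t = hook (n + 1) := by
    intro n
    rw [integral_Ioi_eq_hookIntegral zero_le_two (by fun_prop)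
      (f := fun z ↦ p.eval z * twistedGaussian (n + 1) z)]
    · simp [hhook]
    · exact ((hasExpDecayOn_twistedGaussian (y₀ := 0) (by push_cast; positivity)).mono
        Icc_subset_Ici_self).polynomial_mul (Metric.isBounded_Icc 0 2) p
  have hsucc := hasSum_integral_mul_twistedGaussian hp0
  have hdiff := hasSum_integral_mul_twistedGaussian (p := p - p.comp (X + C (2 * I)))
    (by simp [hp0, hp2])
  simp only [eval_sub, eval_comp, eval_add, eval_X, eval_C,
    integral_sub_shift_mul_twistedGaussian] at hdiff
  simp only [hhook_succ] at hsucc hdiff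
  have hhook_sum := (hasSum_nat_add_iff 1).1 hsucc
  rw [Finset.sum_range_one] at hhook_sum
  have hsum := (hdiff.sub hsucc).add hhook_sum
  rw [hhook_zero, ← add_assoc, sub_add_cancel] at hsum
  exact hsum.congr_fun fun n ↦ by ring

theorem integral_sub_shift_mul_twistedGaussian_div_exp_sub_one (hp0 : p.eval 0 = 0)
    (hp : ∀ z, p.eval (2 * I - z) = p.eval z) :
    ∫ t in Ioi (0 : ℝ), (p.eval (t : ℂ) - p.eval (t + 2 * I)) * twistedGaussian 0 t /
        (Real.exp (2 * π * t) - 1 : ℝ) =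
      p.eval I / 2 - hookIntegral 2 (fun z ↦ p.eval z * twistedGaussian 0 z) := by
  have hp2 : p.eval (2 * I) = 0 := by simpa [hp0] using hp 0
  have hnat := hasSum_segmentIntegral hp0 hp2
  have hint := HasSum.of_nat_of_neg_add_one hnat
    (by simpa only [segmentIntegral_neg_add_one hp] using hnat)
  have htsum := tsum_segmentIntegral hp0 hp2 hint.summable
  rw [hint.tsum_eq] at htsum
  linear_combination htsum / 2

end TwistedGaussian

section SquareSubstitution

variable {f : ℝ → ℝ}

lemma integrableOn_Ioi_two_mul_comp_sq_iff :
    IntegrableOn (fun t ↦ 2 * t * f (t ^ 2)) (Ioi 0) ↔ IntegrableOn f (Ioi 0) := by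
  rw [← integrableOn_Ioi_comp_rpow_iff f two_ne_zero]
  norm_num

lemma integral_Ioi_two_mul_comp_sq :
    ∫ t in Ioi (0 : ℝ), 2 * t * f (t ^ 2) = ∫ x in Ioi (0 : ℝ), f x := by
  rw [← integral_comp_rpow_Ioi_of_pos (g := f) two_pos]
  norm_num

end SquareSubstitution

section RamanujanIntegral

open Complex Polynomial

lemma hookIntegral_quartic_mul_twistedGaussian_zero :
    hookIntegral 2 (fun z ↦ I / 4 * z ^ 2 * (z - 2 * I) ^ 2 * twistedGaussian 0 z) =
      (1 / π - 3 * I / (4 * π ^ 2)) * ((1 + I) / 2) - 2 / π ^ 2 := by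
  have hπ : (π : ℂ) ≠ 0 := ofReal_ne_zero.2 pi_ne_zero
  set q : ℂ[X] := C (1 / (4 * (π : ℂ))) * X ^ 3 - C (I / π) * X ^ 2
    + C (3 * I / (4 * π ^ 2) - 1 / π) * X + C (2 / (π : ℂ) ^ 2) with hq
  -- The coefficients of `q` and the constant are forced by `quartic = q' - 2 b z q + constant`
  -- with `b = -(π / 2) I`.
  have hquartic : ∀ z, I / 4 * z ^ 2 * (z - 2 * I) ^ 2 = (derivative q -
      C (2 * -(π / 2 * I)) * X * q + C (1 / π - 3 * I / (4 * π ^ 2))).eval z := by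
    intro z
    simp only [hq, derivative_add, derivative_sub, derivative_C_mul, derivative_X_pow,
      derivative_X, derivative_C, eval_add, eval_sub, eval_mul, eval_pow, eval_C, eval_X, eval_one,
      eval_zero]
    push_cast
    field_simp
    linear_combination (4 * π * I - 3) * z ^ 2 * π * I_sq
  have hsqrt : (π / -(π / 2 * I) : ℂ) ^ (1 / 2 : ℂ) = 1 + I := by
    have hsq : (π / -(π / 2 * I) : ℂ) = (1 + I) ^ 2 := by
      rw [div_eq_iff (by simp [hπ])]
      linear_combination π / 2 * (2 + I) * I_sq
    rw [hsq, one_div, sq_cpow_two_inv (by simp)]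
  simp only [hquartic, twistedGaussian_zero]
  rw [hookIntegral_polynomial_mul_cexp_neg_mul_sq two_pos (by simp) (by simp [pi_pos]), hsqrt]
  simp [hq]

lemma integral_cube_mul_twistedGaussian_div_exp_sub_one :
    ∫ t in Ioi (0 : ℝ), 2 * (t : ℂ) ^ 3 * twistedGaussian 0 t / (Real.exp (2 * π * t) - 1 : ℝ) =
      ((13 - 4 * π) / (8 * π ^ 2) : ℝ) + (3 / (8 * π ^ 2) - 1 / (2 * π) + 1 / 8 : ℝ) * I := by
  have hπ : (π : ℂ) ≠ 0 := ofReal_ne_zero.2 pi_ne_zero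
  set p : ℂ[X] := C (I / 4) * X ^ 2 * (X - C (2 * I)) ^ 2 with hp
  have hp_eval : ∀ z, p.eval z = I / 4 * z ^ 2 * (z - 2 * I) ^ 2 := by simp [hp]
  have hp_sub : ∀ z, p.eval z - p.eval (z + 2 * I) = 2 * z ^ 3 := by
    intro z
    rw [hp_eval, hp_eval]
    linear_combination (-2 * z ^ 3) * I_sq
  have hp_refl : ∀ z, p.eval (2 * I - z) = p.eval z := by
    intro z
    rw [hp_eval, hp_eval]
    ring
  have hkey := integral_sub_shift_mul_twistedGaussian_div_exp_sub_one (by simp [hp_eval]) hp_refl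
  simp only [hp_sub] at hkey
  simp only [hp_eval, hookIntegral_quartic_mul_twistedGaussian_zero] at hkey
  rw [hkey]
  push_cast
  field_simp
  linear_combination 8 * (π ^ 2 * I * (I ^ 2 - 1) + 3) * I_sq

lemma integrableOn_cube_mul_twistedGaussian_div_exp_sub_one : IntegrableOn (fun t : ℝ ↦
    2 * (t : ℂ) ^ 3 * twistedGaussian 0 t / (Real.exp (2 * π * t) - 1 : ℝ)) (Ioi 0) := by
  have hpoly : (C 2 * X ^ 3 : ℂ[X]).eval 0 = 0 := by simp
  have hint := integrableOn_eval_mul_div_exp_sub_one two_pi_pos hpoly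
    (u := fun t : ℝ ↦ twistedGaussian 0 t) (by fun_prop)
    fun t ↦ (norm_twistedGaussian_zero_ofReal t).le
  simpa only [eval_mul, eval_C, eval_pow, eval_X] using hint

lemma re_cube_mul_twistedGaussian_div_exp_sub_one (t : ℝ) :
    (2 * (t : ℂ) ^ 3 * twistedGaussian 0 t / (Real.exp (2 * π * t) - 1 : ℝ)).re =
      2 * t ^ 3 * Real.cos (π * t ^ 2 / 2) / (Real.exp (2 * π * t) - 1) := by
  have hgauss : twistedGaussian 0 t = cexp ((π * t ^ 2 / 2 : ℝ) * I) := by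
    rw [twistedGaussian]
    push_cast
    ring_nf
  rw [div_ofReal_re, hgauss, ← exp_ofReal_mul_I_re]
  norm_cast
  rw [re_ofReal_mul]

end RamanujanIntegral

/-- Ramanujan's integral `R_C(1, 1/2)` converges and equals `(13 - 4π)/(8π²)`. -/
theorem ramanujan_RC_one_half :
    IntegrableOn
      (fun x : ℝ => x * Real.cos (π * x / 2) / (Real.exp (2 * π * Real.sqrt x) - 1)) (Ioi 0) ∧
    (∫ x in Ioi (0:ℝ), x * Real.cos (π * x / 2) / (Real.exp (2 * π * Real.sqrt x) - 1)) =
      (13 - 4 * π) / (8 * π ^ 2) := by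
  set J : ℝ → ℂ := fun t ↦ 2 * (t : ℂ) ^ 3 * twistedGaussian 0 t / (Real.exp (2 * π * t) - 1 : ℝ)
    with hJ
  have hsubst : EqOn (fun t ↦ 2 * t * (t ^ 2 * Real.cos (π * t ^ 2 / 2) /
      (Real.exp (2 * π * √(t ^ 2)) - 1))) (fun t ↦ (J t).re) (Ioi 0) := by
    intro t ht
    simp only [hJ, re_cube_mul_twistedGaussian_div_exp_sub_one, Real.sqrt_sq (le_of_lt ht)]
    ring
  have hint : IntegrableOn J (Ioi 0) := integrableOn_cube_mul_twistedGaussian_div_exp_sub_one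
  rw [← integrableOn_Ioi_two_mul_comp_sq_iff, ← integral_Ioi_two_mul_comp_sq,
    integrableOn_congr_fun hsubst measurableSet_Ioi, setIntegral_congr_fun measurableSet_Ioi hsubst]
  refine ⟨hint.re, ?_⟩
  have hre : ∫ t in Ioi 0, (J t).re = (∫ t in Ioi 0, J t).re := integral_re hint
  rw [hre, integral_cube_mul_twistedGaussian_div_exp_sub_one, Complex.add_re, Complex.ofReal_re,
    Complex.re_ofReal_mul, Complex.I_re, mul_zero, add_zero]
end

section
/- The integral R_C(2, 2) = ∫_0^∞ x²·cos(2πx)/(exp(2π√x) − 1) dx converges and equals (1/256)·(1 − 5/π + 5/π²). -/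
open MeasureTheory Real Set

/-!
With `x = t ^ 2`, the integral of `x ^ m cos (π n x) / (e ^ (2 π √x) - 1)` is the real part of
`2 ∫_0^∞ t ^ (2 m + 1) e ^ (π i n t ^ 2) / (e ^ (2 π t) - 1) dt`. On the ray `t = ζ₈ s`, with
`ζ₈ = e ^ (π i / 4)`, the oscillating exponential becomes the Gaussian `e ^ (-π n s ^ 2)`. Under
`s ↦ -s` the rotated integrand changes only by an odd monomial times this Gaussian, so its
integral over the half-line is half of its integral over the whole line, up to an explicit moment.

The denominator now has period `ζ₈`. For even `n`, multiplying the Gaussian translated by `ζ₈` by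
the `n`-th power of the exponential `q` in the denominator gives back the Gaussian. Hence, if the
polynomial `B` satisfies `B (x + 1) - B x = x ^ (2 m + 1)`, the integrand with `B` in place of
`x ^ (2 m + 1)` has as its difference over one period the original integrand minus a Gaussian
multiple of `1 + q + ⋯ + q ^ (n - 1)`. If `B` vanishes at `0` and `1`, the only poles between the
real line and its translate disappear and this difference integrates to zero. After completing
squares, the geometric sum contributes finitely many Gaussian moments.
-/

namespace RamanujanRC

open Filter Asymptotics Topology
open Complex (I)

section Strip

/-- The closed horizontal strip between the real axis and the line `Im w = b`; the line may lie
below the axis. -/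
def closedStrip (b : ℝ) : Set ℂ := Complex.im ⁻¹' uIcc 0 b

lemma ofReal_add_mem_closedStrip {b : ℝ} {c : ℂ} (hc : c.im ∈ uIcc 0 b) (x : ℝ) :
    (x + c : ℂ) ∈ closedStrip b := by
  simpa [closedStrip] using hc

/-- The filter of points of `closedStrip b` escaping to one of its two ends, used to state decay
conditions on a strip as asymptotic estimates. -/
def stripEnds (b : ℝ) : Filter ℂ := comap Complex.re (cocompact ℝ) ⊓ 𝓟 (closedStrip b)

lemma eventually_stripEnds {b : ℝ} {p : ℂ → Prop} :
    (∀ᶠ w in stripEnds b, p w) ↔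
      ∀ᶠ x in cocompact ℝ, ∀ w : ℂ, w.re = x → w ∈ closedStrip b → p w := by
  rw [stripEnds, eventually_inf_principal, eventually_comap]

lemma tendsto_re_stripEnds (b : ℝ) : Tendsto Complex.re (stripEnds b) (cocompact ℝ) :=
  tendsto_comap.mono_left inf_le_left

lemma eventually_mem_closedStrip (b : ℝ) : ∀ᶠ w in stripEnds b, w ∈ closedStrip b :=
  mem_inf_of_right (mem_principal_self _)

lemma tendsto_ofReal_add_stripEnds {b : ℝ} {c : ℂ} (hc : c.im ∈ uIcc 0 b) :
    Tendsto (fun x : ℝ => (x + c : ℂ)) (cocompact ℝ) (stripEnds b) := by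
  refine tendsto_inf.2 ⟨tendsto_comap_iff.2 ?_, tendsto_principal.2 <|
    Eventually.of_forall (ofReal_add_mem_closedStrip hc)⟩
  simpa [Function.comp_def] using (Homeomorph.addRight c.re).isClosedEmbedding.tendsto_cocompact

variable {E : Type*} [NormedAddCommGroup E] {f : ℂ → E} {g : ℝ → ℝ} {b : ℝ}

lemma integrable_ofReal_add {c : ℂ} (hc : c.im ∈ uIcc 0 b) (hf : ContinuousOn f (closedStrip b))
    (hfg : f =O[stripEnds b] fun w => g w.re) (hg : Integrable g) :
    Integrable fun x : ℝ => f (x + c) := by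
  have hcont : Continuous fun x : ℝ => f (x + c) :=
    hf.comp_continuous (by fun_prop) (ofReal_add_mem_closedStrip hc)
  refine hcont.locallyIntegrable.integrable_of_isBigO_cocompact
    (hfg.comp_tendsto (tendsto_ofReal_add_stripEnds hc)) ?_
  simpa [Function.comp_def] using (hg.comp_add_right c.re).integrableAtFilter _

variable [NormedSpace ℂ E]

lemma tendsto_integral_vertical (hfg : f =O[stripEnds b] fun w => g w.re)
    (hg : Tendsto g (cocompact ℝ) (𝓝 0)) :
    Tendsto (fun x : ℝ => ∫ y in (0 : ℝ)..b, f (x + y * I)) (cocompact ℝ) (𝓝 0) := by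
  obtain ⟨C, hC⟩ := hfg.bound
  have hbound : Tendsto (fun x => C * ‖g x‖ * |b - 0|) (cocompact ℝ) (𝓝 0) := by
    simpa using (hg.norm.const_mul C).mul_const |b - 0|
  refine squeeze_zero_norm' ?_ hbound
  filter_upwards [eventually_stripEnds.1 hC] with x hx
  refine intervalIntegral.norm_integral_le_of_norm_le_const fun y hy => ?_
  simpa using hx (x + y * I) (by simp) (by simpa [closedStrip] using uIoc_subset_uIcc hy)

theorem integral_ofReal_add_eq [CompleteSpace E] (c : ℂ)
    (hf : DifferentiableOn ℂ f (closedStrip c.im))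
    (hfg : f =O[stripEnds c.im] fun w => g w.re) (hg : Integrable g)
    (hg0 : Tendsto g (cocompact ℝ) (𝓝 0)) :
    ∫ x : ℝ, f (x + c) = ∫ x : ℝ, f x := by
  have rectangle (R : ℝ) : (∫ x in (-R)..R, f x) - (∫ x in (-R)..R, f (x + c.im * I)) +
      I • (∫ y in (0 : ℝ)..c.im, f (R + y * I)) -
      I • (∫ y in (0 : ℝ)..c.im, f ((-R : ℝ) + y * I)) = 0 := by
    simpa using Complex.integral_boundary_rect_eq_zero_of_differentiableOn f (-R : ℝ)
      (R + c.im * I) (hf.mono fun w hw => by simpa [closedStrip] using hw.2)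
  have bottom := intervalIntegral_tendsto_integral
    (integrable_ofReal_add (c := 0) (by simp) hf.continuousOn hfg hg)
    tendsto_neg_atTop_atBot tendsto_id
  have top := intervalIntegral_tendsto_integral
    (integrable_ofReal_add (c := c.im * I) (by simp) hf.continuousOn hfg hg)
    tendsto_neg_atTop_atBot tendsto_id
  have vertical := tendsto_integral_vertical hfg hg0
  have right := (vertical.comp (tendsto_id.mono_right atTop_le_cocompact)).const_smul I
  have left := (vertical.comp (tendsto_neg_atTop_atBot.mono_right atBot_le_cocompact)).const_smul I
  have limit := ((bottom.sub top).add right).sub left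
  simp only [add_zero, Function.comp_apply, id_eq, rectangle, smul_zero, sub_zero] at limit
  have horizontal : ∫ x : ℝ, f x = ∫ x : ℝ, f (x + c.im * I) :=
    (sub_eq_zero.1 (tendsto_nhds_unique limit tendsto_const_nhds))
  rw [horizontal, ← integral_add_right_eq_self (fun x : ℝ => f (x + c.im * I)) c.re]
  congr 1 with x
  rw [Complex.ofReal_add, add_assoc, Complex.re_add_im]

end Strip

lemma tendsto_exp_neg_mul_abs_cocompact {a : ℝ} (ha : 0 < a) :
    Tendsto (fun x : ℝ => rexp (-a * |x|)) (cocompact ℝ) (𝓝 0) :=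
  tendsto_exp_atBot.comp
    ((tendsto_norm_cocompact_atTop (E := ℝ)).const_mul_atTop_of_neg (neg_neg_of_pos ha))

lemma integrable_exp_neg_mul_abs {a : ℝ} (ha : 0 < a) :
    Integrable fun x : ℝ => rexp (-a * |x|) := by
  have hcont : Continuous fun x : ℝ => rexp (-a * |x|) := by fun_prop
  refine hcont.locallyIntegrable.integrable_of_isBigO_atTop_of_norm_isNegInvariant
    (g := fun x => rexp (-a * x)) (.of_forall fun x => by simp) ?_
    ⟨Ioi 0, Ioi_mem_atTop 0, exp_neg_integrableOn_Ioi 0 ha⟩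
  exact EventuallyEq.isBigO <| (eventually_ge_atTop 0).mono fun x hx => by simp [abs_of_nonneg hx]

section RemovableQuotient

open Classical in
/-- The quotient `N / f` of two holomorphic functions with its removable singularities filled in:
at a zero of `f` it takes the value given by l'Hôpital's rule for a simple zero. -/
noncomputable def removableQuotient (N f : ℂ → ℂ) (z : ℂ) : ℂ :=
  if f z = 0 then deriv N z / deriv f z else N z / f z

variable {N f : ℂ → ℂ}

lemma removableQuotient_of_ne {z : ℂ} (hz : f z ≠ 0) : removableQuotient N f z = N z / f z :=
  if_neg hz

lemma differentiableAt_dslope_self (hf : Differentiable ℂ f) (c : ℂ) :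
    DifferentiableAt ℂ (dslope f c) c :=
  ((Complex.differentiableOn_dslope univ_mem).2 hf.differentiableOn).differentiableAt univ_mem

/-- Near a common zero `c`, the factors `z - c` of `N z` and `f z` cancel and leave a quotient of
slopes. -/
lemma differentiableAt_removableQuotient (hN : Differentiable ℂ N) (hf : Differentiable ℂ f) {c : ℂ}
    (hNc : f c = 0 → N c = 0) (hfc : f c = 0 → deriv f c ≠ 0) :
    DifferentiableAt ℂ (removableQuotient N f) c := by
  by_cases hc : f c = 0
  · have hslope : dslope f c c ≠ 0 := by rw [dslope_same]; exact hfc hc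
    have hf_slope := differentiableAt_dslope_self hf c
    refine ((differentiableAt_dslope_self hN c).div hf_slope hslope).congr_of_eventuallyEq ?_
    filter_upwards [hf_slope.continuousAt.eventually_ne hslope] with z hz
    rcases eq_or_ne z c with rfl | hzc
    · simp [removableQuotient, hc, dslope_same]
    · have hN_eq : (z - c) * dslope N c z = N z := by simpa [hNc hc] using sub_smul_dslope N c z
      have hf_eq : (z - c) * dslope f c z = f z := by simpa [hc] using sub_smul_dslope f c z
      have hsub : z - c ≠ 0 := sub_ne_zero.2 hzc
      rw [removableQuotient_of_ne (hf_eq ▸ mul_ne_zero hsub hz), ← hN_eq, ← hf_eq,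
        mul_div_mul_left _ _ hsub, Pi.div_apply]
  · refine ((hN c).div (hf c) hc).congr_of_eventuallyEq ?_
    filter_upwards [(hf c).continuousAt.eventually_ne hc] with z hz
    exact removableQuotient_of_ne hz

end RemovableQuotient

section Gaussian

open Polynomial

/-- The primitive eighth root of unity `exp (π i / 4)`, a square root of `i`. -/
noncomputable def ζ₈ : ℂ := Complex.exp (π / 4 * I)

lemma ζ₈_sq : ζ₈ ^ 2 = I := by
  rw [ζ₈, ← Complex.exp_nat_mul]
  exact (congrArg Complex.exp (by push_cast; ring)).trans Complex.exp_pi_div_two_mul_I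

lemma ζ₈_ne_zero : ζ₈ ≠ 0 := Complex.exp_ne_zero _

lemma ζ₈_re : ζ₈.re = √2 / 2 := by
  rw [ζ₈, ← cos_pi_div_four]
  exact_mod_cast Complex.exp_ofReal_mul_I_re (π / 4)

lemma ζ₈_im : ζ₈.im = √2 / 2 := by
  rw [ζ₈, ← sin_pi_div_four]
  exact_mod_cast Complex.exp_ofReal_mul_I_im (π / 4)

/-- The Gaussian `exp (-π n w²)` weighted by a polynomial in `w / ζ₈`. In the coordinate
`x = w / ζ₈`, in which the poles of Ramanujan's integrand are integers, the weight is `p x`. -/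
noncomputable def polyGaussian (n : ℝ) (p : ℂ[X]) (w : ℂ) : ℂ :=
  p.eval (w / ζ₈) * Complex.exp (-(π * n) * w ^ 2)

/-- The integral of `polyGaussian n p` over the real line. -/
noncomputable def gaussianIntegral (n : ℝ) (p : ℂ[X]) : ℂ :=
  ∫ s : ℝ, polyGaussian n p s

lemma differentiable_polyGaussian (n : ℝ) (p : ℂ[X]) : Differentiable ℂ (polyGaussian n p) := by
  have hp : Differentiable ℂ fun w : ℂ => p.eval (w / ζ₈) :=
    p.differentiable.comp (differentiable_id.div_const ζ₈)
  exact hp.mul (by fun_prop)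

lemma id_isBigO_re_stripEnds (b : ℝ) : (fun w : ℂ => w) =O[stripEnds b] fun w => |w.re| := by
  refine IsBigO.of_bound (1 + |b|) ?_
  have hre := (tendsto_norm_cocompact_atTop.comp (tendsto_re_stripEnds b)).eventually_ge_atTop 1
  filter_upwards [hre, eventually_mem_closedStrip b] with w hw him
  have him' : |w.im| ≤ |b| := by simpa using abs_sub_left_of_mem_uIcc him
  have hw' : 1 ≤ |w.re| := hw
  calc ‖w‖ ≤ |w.re| + |w.im| := Complex.norm_le_abs_re_add_abs_im w
    _ ≤ |w.re| + |b| * |w.re| := by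
      gcongr
      exact him'.trans (le_mul_of_one_le_right (abs_nonneg b) hw')
    _ = (1 + |b|) * ‖|w.re|‖ := by rw [norm_eq_abs, abs_abs]; ring

lemma cexp_neg_mul_sq_isBigO_stripEnds {a : ℝ} (ha : 0 ≤ a) (b : ℝ) :
    (fun w : ℂ => Complex.exp (-a * w ^ 2)) =O[stripEnds b] fun w => rexp (-a * |w.re| ^ 2) := by
  refine IsBigO.of_bound (rexp (a * b ^ 2)) ?_
  filter_upwards [eventually_mem_closedStrip b] with w him
  have him' : w.im ^ 2 ≤ b ^ 2 := sq_le_sq.2 (by simpa using abs_sub_left_of_mem_uIcc him)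
  have hre : (-a * w ^ 2 : ℂ).re = a * w.im ^ 2 + -a * |w.re| ^ 2 := by
    rw [sq_abs]
    simp only [pow_two, neg_mul, Complex.neg_re, Complex.mul_re, Complex.mul_im, Complex.ofReal_re,
      Complex.ofReal_im, zero_mul, sub_zero]
    ring
  rw [Complex.norm_exp, norm_of_nonneg (exp_nonneg _), hre, exp_add]
  gcongr

lemma polyGaussian_isBigO_stripEnds {n : ℝ} (hn : 0 < n) (p : ℂ[X]) (b : ℝ) :
    polyGaussian n p =O[stripEnds b] fun w => rexp (-(1 / 2) * |w.re|) := by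
  induction p using Polynomial.induction_on' with
  | add p q hp hq => exact (hp.add hq).congr_left fun w => by simp [polyGaussian, add_mul]
  | monomial k c =>
    have hdecay := ((rpow_mul_exp_neg_mul_sq_isLittleO_exp_neg (mul_pos pi_pos hn) k).comp_tendsto
      (tendsto_norm_cocompact_atTop.comp (tendsto_re_stripEnds b))).isBigO
    simp only [Function.comp_def, rpow_natCast, norm_eq_abs] at hdecay
    have hpow := ((id_isBigO_re_stripEnds b).pow k).const_mul_left (c / ζ₈ ^ k)
    refine ((hpow.mul (cexp_neg_mul_sq_isBigO_stripEnds (mul_pos pi_pos hn).le b)).trans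
      hdecay).congr_left fun w => ?_
    simp only [polyGaussian, eval_monomial, Complex.ofReal_mul]
    ring

lemma integrable_polyGaussian_add {n : ℝ} (hn : 0 < n) (p : ℂ[X]) (c : ℂ) :
    Integrable fun s : ℝ => polyGaussian n p (s + c) :=
  integrable_ofReal_add (b := c.im) (by simp)
    (differentiable_polyGaussian n p).continuous.continuousOn
    (polyGaussian_isBigO_stripEnds hn p _) (integrable_exp_neg_mul_abs one_half_pos)

lemma integrable_polyGaussian {n : ℝ} (hn : 0 < n) (p : ℂ[X]) :
    Integrable fun s : ℝ => polyGaussian n p s := by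
  simpa using integrable_polyGaussian_add hn p 0

lemma integral_polyGaussian_add {n : ℝ} (hn : 0 < n) (p : ℂ[X]) (c : ℂ) :
    ∫ s : ℝ, polyGaussian n p (s + c) = gaussianIntegral n p :=
  integral_ofReal_add_eq c (differentiable_polyGaussian n p).differentiableOn
    (polyGaussian_isBigO_stripEnds hn p _) (integrable_exp_neg_mul_abs one_half_pos)
    (tendsto_exp_neg_mul_abs_cocompact one_half_pos)

lemma gaussianIntegral_add {n : ℝ} (hn : 0 < n) (p q : ℂ[X]) :
    gaussianIntegral n (p + q) = gaussianIntegral n p + gaussianIntegral n q := by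
  simp_rw [gaussianIntegral, polyGaussian, eval_add, add_mul]
  exact integral_add (integrable_polyGaussian hn p) (integrable_polyGaussian hn q)

lemma gaussianIntegral_C_mul (n : ℝ) (c : ℂ) (p : ℂ[X]) :
    gaussianIntegral n (C c * p) = c * gaussianIntegral n p := by
  simp_rw [gaussianIntegral, polyGaussian, eval_C_mul, mul_assoc]
  exact integral_const_mul _ _

lemma gaussianIntegral_one (n : ℝ) : gaussianIntegral n 1 = (1 / √n : ℝ) := by
  have h := integral_gaussian (π * n)
  rw [div_mul_cancel_left₀ pi_ne_zero, sqrt_inv, ← one_div] at h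
  rw [← h, ← integral_complex_ofReal]
  simp [gaussianIntegral, polyGaussian]

lemma hasDerivAt_polyGaussian (n : ℝ) (p : ℂ[X]) (w : ℂ) :
    HasDerivAt (polyGaussian n p)
      (ζ₈⁻¹ * (polyGaussian n (derivative p) w - 2 * π * n * I * polyGaussian n (X * p) w)) w := by
  have hp : HasDerivAt (fun w => p.eval (w / ζ₈)) (p.derivative.eval (w / ζ₈) * (1 / ζ₈)) w :=
    HasDerivAt.comp (h₂ := p.eval) w (p.hasDerivAt _) ((hasDerivAt_id' w).div_const ζ₈)
  refine (hp.mul (((hasDerivAt_pow 2 w).const_mul (-(π * n : ℂ))).cexp)).congr_deriv ?_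
  simp only [polyGaussian, eval_mul, eval_X, ← ζ₈_sq]
  field_simp [ζ₈_ne_zero]
  ring

/-- Gaussian integration by parts, which computes all moments recursively. -/
lemma gaussianIntegral_X_mul {n : ℝ} (hn : 0 < n) (p : ℂ[X]) :
    gaussianIntegral n (X * p) = -I / (2 * π * n) * gaussianIntegral n (derivative p) := by
  have hint := integrable_polyGaussian hn
  have hXp := (hint (X * p)).const_mul (2 * π * n * I)
  have h := integral_eq_zero_of_hasDerivAt_of_integrable
    (fun s : ℝ => (hasDerivAt_polyGaussian n p s).comp_ofReal)
    (((hint (derivative p)).sub hXp).const_mul ζ₈⁻¹) (hint p)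
  rw [integral_const_mul, integral_sub (hint _) hXp, integral_const_mul] at h
  have hparts := sub_eq_zero.1 ((mul_eq_zero.1 h).resolve_left (inv_ne_zero ζ₈_ne_zero))
  have hn' : (n : ℂ) ≠ 0 := mod_cast hn.ne'
  have hπ : (π : ℂ) ≠ 0 := mod_cast pi_ne_zero
  change gaussianIntegral n (derivative p) = 2 * π * n * I * gaussianIntegral n (X * p) at hparts
  rw [hparts]
  field_simp
  rw [Complex.I_sq]
  ring

end Gaussian

section ContourShift

open Polynomial

/-- The exponential `exp (2 π z)` of Ramanujan's integrand on the rotated ray `z = ζ₈ w`. It takes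
the value `1` exactly at the integer multiples of `ζ₈`. -/
noncomputable def rotatedExp (w : ℂ) : ℂ := Complex.exp (2 * π * ζ₈ * w)

lemma hasDerivAt_rotatedExp (w : ℂ) :
    HasDerivAt rotatedExp (rotatedExp w * (2 * π * ζ₈)) w :=
  ((hasDerivAt_id' w).const_mul (2 * π * ζ₈)).cexp.congr_deriv (by rw [mul_one, rotatedExp])

lemma differentiable_rotatedExp : Differentiable ℂ rotatedExp := fun w =>
  (hasDerivAt_rotatedExp w).differentiableAt

lemma rotatedExp_neg (w : ℂ) : rotatedExp (-w) = (rotatedExp w)⁻¹ := by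
  rw [rotatedExp, mul_neg, Complex.exp_neg, rotatedExp]

lemma rotatedExp_add_ζ₈ (w : ℂ) : rotatedExp (w + ζ₈) = rotatedExp w := by
  have hperiod : 2 * π * ζ₈ * (w + ζ₈) = 2 * π * ζ₈ * w + 2 * π * I := by
    rw [← ζ₈_sq]
    ring
  rw [rotatedExp, hperiod, Complex.exp_periodic, rotatedExp]

lemma rotatedExp_eq_one_iff {w : ℂ} : rotatedExp w = 1 ↔ ∃ k : ℤ, w = k * ζ₈ := by
  rw [rotatedExp, Complex.exp_eq_one_iff]
  refine exists_congr fun k => ?_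
  have hmul : (k : ℂ) * (2 * π * I) = 2 * π * ζ₈ * (k * ζ₈) := by
    rw [← ζ₈_sq]
    ring
  rw [hmul, mul_right_inj' (by simp [ζ₈_ne_zero, pi_ne_zero])]

lemma rotatedExp_ofReal_ne_one {s : ℝ} (hs : s ≠ 0) : rotatedExp s ≠ 1 := by
  intro h
  obtain ⟨k, hk⟩ := rotatedExp_eq_one_iff.1 h
  have him : (k : ℝ) = 0 := by simpa [ζ₈_im] using (congrArg Complex.im hk).symm
  have hk0 : k = 0 := mod_cast him
  exact hs (by simpa [hk0] using hk)

lemma eq_zero_or_eq_ζ₈_of_rotatedExp_eq_one {w : ℂ} (hw : w ∈ closedStrip ζ₈.im)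
    (h : rotatedExp w = 1) : w = 0 ∨ w = ζ₈ := by
  obtain ⟨k, rfl⟩ := rotatedExp_eq_one_iff.1 h
  have hpos : 0 < ζ₈.im := by rw [ζ₈_im]; positivity
  have him : (k * ζ₈ : ℂ).im = k * ζ₈.im := by simp
  rw [closedStrip, mem_preimage, uIcc_of_le hpos.le, him] at hw
  have hk0 : (0 : ℝ) ≤ k := nonneg_of_mul_nonneg_left hw.1 hpos
  have hk1 : (k : ℝ) ≤ 1 := le_of_mul_le_mul_right (by simpa using hw.2) hpos
  norm_cast at hk0 hk1
  interval_cases k <;> simp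

lemma norm_rotatedExp (w : ℂ) : ‖rotatedExp w‖ = rexp (√2 * π * (w.re - w.im)) := by
  have hre : (2 * π * ζ₈ * w).re = √2 * π * (w.re - w.im) := by
    simp only [Complex.mul_re, Complex.mul_im, Complex.re_ofNat, Complex.im_ofNat,
      Complex.ofReal_re, Complex.ofReal_im, ζ₈_re, ζ₈_im]
    ring
  rw [rotatedExp, Complex.norm_exp, hre]

lemma half_le_abs_exp_sub_one {t : ℝ} (ht : 1 ≤ |t|) : 1 / 2 ≤ |rexp t - 1| := by
  rcases le_abs.1 ht with h | h
  · exact le_abs.2 (.inl (by linarith [add_one_le_exp t]))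
  · have hexp : rexp t ≤ 1 / 2 := by
      rw [← neg_neg t, exp_neg, ← one_div]
      exact one_div_le_one_div_of_le two_pos (by linarith [add_one_le_exp (-t)])
    exact le_abs.2 (.inr (by linarith))

lemma half_le_norm_rotatedExp_sub_one {w : ℂ} (hw : 1 ≤ |w.re - w.im|) :
    1 / 2 ≤ ‖rotatedExp w - 1‖ := by
  have hscale : 1 ≤ √2 * π := one_le_mul_of_one_le_of_one_le (by simp) (by linarith [two_le_pi])
  have habs : 1 ≤ |√2 * π * (w.re - w.im)| := by
    rw [abs_mul, abs_of_nonneg (by positivity)]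
    exact one_le_mul_of_one_le_of_one_le hscale hw
  calc (1 : ℝ) / 2 ≤ |‖rotatedExp w‖ - ‖(1 : ℂ)‖| := by
        simpa [norm_rotatedExp] using half_le_abs_exp_sub_one habs
    _ ≤ ‖rotatedExp w - 1‖ := abs_norm_sub_norm_le _ _

lemma eventually_half_le_norm_rotatedExp_sub_one (b : ℝ) :
    ∀ᶠ w in stripEnds b, 1 / 2 ≤ ‖rotatedExp w - 1‖ := by
  have hre := (tendsto_norm_cocompact_atTop.comp (tendsto_re_stripEnds b)).eventually_ge_atTop
    (|b| + 1)
  filter_upwards [hre, eventually_mem_closedStrip b] with w hw him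
  have him' : |w.im| ≤ |b| := by simpa using abs_sub_left_of_mem_uIcc him
  have hw' : |b| + 1 ≤ |w.re| := hw
  exact half_le_norm_rotatedExp_sub_one (by linarith [abs_sub_abs_le_abs_sub w.re w.im])

/-- The weighted Gaussian divided by `rotatedExp - 1`, with its singularities removed. -/
noncomputable def gaussianQuotient (n : ℝ) (p : ℂ[X]) : ℂ → ℂ :=
  removableQuotient (polyGaussian n p) fun w => rotatedExp w - 1

lemma gaussianQuotient_of_ne (n : ℝ) (p : ℂ[X]) {w : ℂ} (hw : rotatedExp w ≠ 1) :
    gaussianQuotient n p w = polyGaussian n p w / (rotatedExp w - 1) :=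
  removableQuotient_of_ne (sub_ne_zero.2 hw)

lemma differentiableOn_gaussianQuotient (n : ℝ) {p : ℂ[X]} (h0 : p.eval 0 = 0)
    (h1 : p.eval 1 = 0) : DifferentiableOn ℂ (gaussianQuotient n p) (closedStrip ζ₈.im) := by
  intro w hw
  refine (differentiableAt_removableQuotient (differentiable_polyGaussian n p)
    (differentiable_rotatedExp.sub_const 1) (fun h => ?_) fun _ => ?_).differentiableWithinAt
  · rcases eq_zero_or_eq_ζ₈_of_rotatedExp_eq_one hw (sub_eq_zero.1 h) with rfl | rfl
    · simp [polyGaussian, h0]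
    · simp [polyGaussian, h1, ζ₈_ne_zero]
  · rw [((hasDerivAt_rotatedExp w).sub_const 1).deriv]
    simp [rotatedExp, ζ₈_ne_zero, pi_ne_zero]

lemma gaussianQuotient_isBigO_stripEnds {n : ℝ} (hn : 0 < n) (p : ℂ[X]) (b : ℝ) :
    gaussianQuotient n p =O[stripEnds b] fun w => rexp (-(1 / 2) * |w.re|) := by
  refine IsBigO.trans (.of_bound 2 ?_) (polyGaussian_isBigO_stripEnds hn p b)
  filter_upwards [eventually_half_le_norm_rotatedExp_sub_one b] with w hw
  have hpos : 0 < ‖rotatedExp w - 1‖ := one_half_pos.trans_le hw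
  rw [gaussianQuotient_of_ne n p (sub_ne_zero.1 (norm_pos_iff.1 hpos)), norm_div,
    div_le_iff₀ hpos, mul_right_comm]
  exact le_mul_of_one_le_left (norm_nonneg _) (by linarith)

lemma integrable_gaussianQuotient_add {n : ℝ} (hn : 0 < n) {p : ℂ[X]} (h0 : p.eval 0 = 0)
    (h1 : p.eval 1 = 0) {c : ℂ} (hc : c.im ∈ uIcc 0 ζ₈.im) :
    Integrable fun s : ℝ => gaussianQuotient n p (s + c) :=
  integrable_ofReal_add hc (differentiableOn_gaussianQuotient n h0 h1).continuousOn
    (gaussianQuotient_isBigO_stripEnds hn p _) (integrable_exp_neg_mul_abs one_half_pos)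

lemma integral_gaussianQuotient_add_ζ₈ {n : ℝ} (hn : 0 < n) {p : ℂ[X]} (h0 : p.eval 0 = 0)
    (h1 : p.eval 1 = 0) :
    ∫ s : ℝ, gaussianQuotient n p (s + ζ₈) = ∫ s : ℝ, gaussianQuotient n p s :=
  integral_ofReal_add_eq ζ₈ (differentiableOn_gaussianQuotient n h0 h1)
    (gaussianQuotient_isBigO_stripEnds hn p _) (integrable_exp_neg_mul_abs one_half_pos)
    (tendsto_exp_neg_mul_abs_cocompact one_half_pos)

/-- Completing the square: translating the Gaussian by a fraction of the period `ζ₈` produces a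
power of `rotatedExp`. -/
lemma cexp_mul_polyGaussian_sub {n : ℝ} (hn : n ≠ 0) (p : ℂ[X]) (r : ℕ) (w : ℂ) :
    Complex.exp (π * I * r ^ 2 / n) * polyGaussian n (p.comp (X + C (r / n : ℂ))) (w - r / n * ζ₈) =
      polyGaussian n p w * rotatedExp w ^ r := by
  have hn' : (n : ℂ) ≠ 0 := mod_cast hn
  have harg : (w - r / n * ζ₈) / ζ₈ + r / n = w / ζ₈ := by
    field_simp [ζ₈_ne_zero]
    ring
  have hsquare : π * I * r ^ 2 / n + -(π * n) * (w - r / n * ζ₈) ^ 2 =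
      -(π * n) * w ^ 2 + r * (2 * π * ζ₈ * w) := by
    rw [← ζ₈_sq]
    field_simp
    ring
  simp only [polyGaussian, rotatedExp, eval_comp, eval_add, eval_X, eval_C, harg]
  rw [mul_left_comm, ← Complex.exp_add, hsquare, Complex.exp_add, Complex.exp_nat_mul]
  exact (mul_assoc _ _ _).symm

lemma polyGaussian_add_ζ₈_mul {n : ℕ} (hn : Even n) (p : ℂ[X]) (w : ℂ) :
    polyGaussian n p (w + ζ₈) * rotatedExp w ^ n = polyGaussian n (p.comp (X + 1)) w := by
  obtain ⟨k, rfl⟩ := hn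
  have hexp : -(π * (k + k : ℕ)) * (w + ζ₈) ^ 2 + (k + k : ℕ) * (2 * π * ζ₈ * w) =
      -(π * (k + k : ℕ)) * w ^ 2 + -(k * (2 * π * I)) := by
    push_cast
    rw [← ζ₈_sq]
    ring
  have hperiod : Complex.exp (-(k * (2 * π * I))) = 1 := by
    rw [Complex.exp_neg, Complex.exp_nat_mul_two_pi_mul_I, inv_one]
  simp only [polyGaussian, rotatedExp, eval_comp, eval_add, eval_X, eval_one, add_div,
    div_self ζ₈_ne_zero, Complex.ofReal_natCast]
  rw [mul_assoc, ← Complex.exp_nat_mul, ← Complex.exp_add, hexp, Complex.exp_add, hperiod, mul_one]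

/-- Over one period of `rotatedExp` the difference of `gaussianQuotient` produces the geometric sum
`1 + q + ⋯ + q ^ (n - 1)` with `q = rotatedExp w`. -/
lemma polyGaussian_div_rotatedExp_sub_one {n : ℕ} (hn : Even n) (hn0 : n ≠ 0) {B p : ℂ[X]}
    (hB : B.comp (X + 1) = B + p) {w : ℂ} (hw : rotatedExp w ≠ 1) :
    polyGaussian n p w / (rotatedExp w - 1) =
      ∑ r ∈ Finset.range n, Complex.exp (π * I * r ^ 2 / n) *
        polyGaussian n (B.comp (X + C (r / n : ℂ))) (w + (ζ₈ - r / n * ζ₈)) +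
      (gaussianQuotient n B (w + ζ₈) - gaussianQuotient n B w) := by
  have hterm (r : ℕ) : Complex.exp (π * I * r ^ 2 / n) *
      polyGaussian n (B.comp (X + C (r / n : ℂ))) (w + (ζ₈ - r / n * ζ₈)) =
        polyGaussian n B (w + ζ₈) * rotatedExp w ^ r := by
    simpa [rotatedExp_add_ζ₈, add_sub_assoc] using
      cexp_mul_polyGaussian_sub (n := n) (mod_cast hn0) B r (w + ζ₈)
  have hdiff : polyGaussian n B (w + ζ₈) * rotatedExp w ^ n =
      polyGaussian n B w + polyGaussian n p w := by
    rw [polyGaussian_add_ζ₈_mul hn, hB]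
    simp [polyGaussian, add_mul]
  have hq : rotatedExp w - 1 ≠ 0 := sub_ne_zero.2 hw
  simp_rw [hterm]
  rw [← Finset.mul_sum, geom_sum_eq hw, gaussianQuotient_of_ne n B hw,
    gaussianQuotient_of_ne n B (by rwa [rotatedExp_add_ζ₈]), rotatedExp_add_ζ₈]
  field_simp
  linear_combination -hdiff

variable {n : ℕ} {B p : ℂ[X]}

theorem integrable_and_integral_polyGaussian_div (hn : Even n) (hn0 : n ≠ 0)
    (hB : B.comp (X + 1) = B + p) (h0 : B.eval 0 = 0) (h1 : B.eval 1 = 0) :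
    Integrable (fun s : ℝ => polyGaussian n p s / (rotatedExp s - 1)) ∧
      ∫ s : ℝ, polyGaussian n p s / (rotatedExp s - 1) =
        ∑ r ∈ Finset.range n,
          Complex.exp (π * I * r ^ 2 / n) * gaussianIntegral n (B.comp (X + C (r / n : ℂ))) := by
  have hpos : (0 : ℝ) < n := mod_cast hn0.bot_lt
  have hae : (fun s : ℝ => polyGaussian n p s / (rotatedExp s - 1)) =ᵐ[volume] fun s : ℝ =>
      ∑ r ∈ Finset.range n, Complex.exp (π * I * r ^ 2 / n) *
        polyGaussian n (B.comp (X + C (r / n : ℂ))) (s + (ζ₈ - r / n * ζ₈)) +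
      (gaussianQuotient n B (s + ζ₈) - gaussianQuotient n B s) := by
    filter_upwards [compl_mem_ae_iff.2 (measure_singleton (0 : ℝ))] with s hs
    exact polyGaussian_div_rotatedExp_sub_one hn hn0 hB (rotatedExp_ofReal_ne_one hs)
  have hterm (r : ℕ) := (integrable_polyGaussian_add hpos (B.comp (X + C (r / n : ℂ)))
    (ζ₈ - r / n * ζ₈)).const_mul (Complex.exp (π * I * r ^ 2 / n))
  have hsum := integrable_finsetSum (Finset.range n) fun r _ => hterm r
  have hshift := integrable_gaussianQuotient_add hpos h0 h1 (c := ζ₈) (by simp)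
  have hbase : Integrable fun s : ℝ => gaussianQuotient n B s := by
    simpa using integrable_gaussianQuotient_add hpos h0 h1 (c := 0) (by simp)
  have hdiff : Integrable fun s : ℝ => gaussianQuotient n B (s + ζ₈) - gaussianQuotient n B s :=
    hshift.sub hbase
  refine ⟨(hsum.add hdiff).congr hae.symm, ?_⟩
  rw [integral_congr_ae hae, integral_add hsum hdiff, integral_sub hshift hbase,
    integral_gaussianQuotient_add_ζ₈ hpos h0 h1, sub_self, add_zero,
    integral_finsetSum _ fun r _ => hterm r]
  simp_rw [integral_const_mul, integral_polyGaussian_add hpos]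

end ContourShift

section SectorRotation

lemma integrable_exp_smul_comp_exp_iff {E : Type*} [NormedAddCommGroup E] [NormedSpace ℝ E]
    {g : ℝ → E} : Integrable (fun x => rexp x • g (rexp x)) ↔ IntegrableOn g (Ioi 0) := by
  simpa [range_exp] using (integrableOn_image_iff_integrableOn_abs_deriv_smul MeasurableSet.univ
    (fun x _ => (Real.hasDerivAt_exp x).hasDerivWithinAt) exp_injective.injOn g).symm

lemma integral_exp_smul_comp_exp {E : Type*} [NormedAddCommGroup E] [NormedSpace ℝ E]
    (g : ℝ → E) : ∫ x, rexp x • g (rexp x) = ∫ t in Ioi 0, g t := by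
  simpa [range_exp] using (integral_image_eq_integral_abs_deriv_smul MeasurableSet.univ
    (fun x _ => (Real.hasDerivAt_exp x).hasDerivWithinAt) exp_injective.injOn g).symm

/-- The logarithm turns the sector between the two rays into a horizontal strip. -/
theorem integrableOn_and_integral_Ioi_eq_integral_ray {h : ℂ → ℂ} {g : ℝ → ℝ} {θ : ℝ}
    (hh : DifferentiableOn ℂ (fun w => Complex.exp w * h (Complex.exp w)) (closedStrip θ))
    (hhg : (fun w => Complex.exp w * h (Complex.exp w)) =O[stripEnds θ] fun w => g w.re)
    (hg : Integrable g) (hg0 : Tendsto g (cocompact ℝ) (𝓝 0)) :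
    IntegrableOn (fun t : ℝ => h t) (Ioi 0) ∧ ∫ t in Ioi (0 : ℝ), h t =
      Complex.exp (θ * I) * ∫ s in Ioi (0 : ℝ), h (Complex.exp (θ * I) * s) := by
  have haxis : (fun x : ℝ => rexp x • h (rexp x : ℝ)) =
      fun x : ℝ => Complex.exp x * h (Complex.exp x) := by
    simp
  have hray (x : ℝ) : Complex.exp (θ * I) * rexp x • h (Complex.exp (θ * I) * (rexp x : ℝ)) =
      Complex.exp (x + θ * I) * h (Complex.exp (x + θ * I)) := by
    rw [Complex.exp_add, mul_comm (Complex.exp x), Complex.ofReal_exp, Complex.real_smul,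
      Complex.ofReal_exp, mul_assoc]
  constructor
  · rw [← integrable_exp_smul_comp_exp_iff, haxis]
    simpa using integrable_ofReal_add (c := 0) (by simp) hh.continuousOn hhg hg
  · rw [← integral_exp_smul_comp_exp (fun t : ℝ => h t), ← integral_exp_smul_comp_exp
      (fun s : ℝ => h (Complex.exp (θ * I) * s)), ← integral_const_mul, haxis]
    simp_rw [hray]
    have him : (θ * I : ℂ).im = θ := by simp
    exact (integral_ofReal_add_eq (θ * I) (by rwa [him]) (by rwa [him]) hg hg0).symm

/-- Ramanujan's integrand in the variable `z = √x`, with the cosine replaced by a complex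
exponential. -/
noncomputable def ramanujanKernel (n : ℝ) (k : ℕ) (z : ℂ) : ℂ :=
  z ^ k * Complex.exp (π * n * I * z ^ 2) / (Complex.exp (2 * π * z) - 1)

lemma two_thirds_mul_norm_le_re_cexp {w : ℂ} (hw : w ∈ closedStrip (π / 4)) :
    2 / 3 * ‖Complex.exp w‖ ≤ (Complex.exp w).re := by
  rw [closedStrip, mem_preimage, uIcc_of_le (by positivity)] at hw
  have hcos : √2 / 2 ≤ cos w.im := by
    rw [← cos_pi_div_four]
    exact cos_le_cos_of_nonneg_of_le_pi hw.1 (by linarith [pi_pos]) hw.2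
  have hsqrt : 4 / 3 ≤ √2 := le_sqrt_of_sq_le (by norm_num)
  rw [Complex.norm_exp, Complex.exp_re, mul_comm]
  gcongr
  linarith

lemma im_cexp_nonneg {w : ℂ} (hw : w ∈ closedStrip (π / 4)) : 0 ≤ (Complex.exp w).im := by
  rw [closedStrip, mem_preimage, uIcc_of_le (by positivity)] at hw
  rw [Complex.exp_im]
  exact mul_nonneg (exp_nonneg _) (sin_nonneg_of_nonneg_of_le_pi hw.1 (by linarith [pi_pos, hw.2]))

lemma norm_mul_exp_norm_le_norm_cexp_sub_one {z : ℂ} (hz : 2 / 3 * ‖z‖ ≤ z.re) :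
    ‖z‖ * rexp ‖z‖ ≤ ‖Complex.exp (2 * π * z) - 1‖ := by
  have hre : ‖z‖ + ‖z‖ ≤ (2 * π * z).re := by
    have : (2 * π * z).re = 2 * π * z.re := by simp
    nlinarith [pi_gt_three, norm_nonneg z]
  have hone : 1 ≤ rexp ‖z‖ := one_le_exp (norm_nonneg z)
  calc ‖z‖ * rexp ‖z‖ ≤ (rexp ‖z‖ - 1) * rexp ‖z‖ := by
        gcongr
        linarith [add_one_le_exp ‖z‖]
    _ ≤ rexp (‖z‖ + ‖z‖) - 1 := by rw [exp_add]; linarith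
    _ ≤ ‖Complex.exp (2 * π * z)‖ - ‖(1 : ℂ)‖ := by
        rw [Complex.norm_exp, norm_one]
        gcongr
    _ ≤ ‖Complex.exp (2 * π * z) - 1‖ := norm_sub_norm_le _ _

lemma norm_cexp_mul_I_mul_sq_le_one {n : ℝ} (hn : 0 ≤ n) {z : ℂ} (hre : 0 ≤ z.re)
    (him : 0 ≤ z.im) : ‖Complex.exp (π * n * I * z ^ 2)‖ ≤ 1 := by
  have h : (π * n * I * z ^ 2 : ℂ).re = -(2 * π * n * (z.re * z.im)) := by
    simp only [pow_two, Complex.mul_re, Complex.mul_im, Complex.ofReal_re, Complex.ofReal_im,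
      Complex.I_re, Complex.I_im]
    ring
  rw [Complex.norm_exp, h, exp_le_one_iff]
  exact neg_nonpos.2 (by positivity)

lemma norm_mul_ramanujanKernel_le {n : ℝ} (hn : 0 ≤ n) (k : ℕ) {z : ℂ} (hz : z ≠ 0)
    (hre : 2 / 3 * ‖z‖ ≤ z.re) (him : 0 ≤ z.im) :
    ‖z * ramanujanKernel n (k + 1) z‖ ≤ ‖z‖ ^ (k + 1) * rexp (-‖z‖) := by
  have hre0 : 0 ≤ z.re := (by positivity : 0 ≤ 2 / 3 * ‖z‖).trans hre
  calc ‖z * ramanujanKernel n (k + 1) z‖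
      = ‖z‖ * (‖z‖ ^ (k + 1) * ‖Complex.exp (π * n * I * z ^ 2)‖ /
          ‖Complex.exp (2 * π * z) - 1‖) := by
        simp only [ramanujanKernel, norm_mul, norm_div, norm_pow]
    _ ≤ ‖z‖ * (‖z‖ ^ (k + 1) * 1 / (‖z‖ * rexp ‖z‖)) := by
        gcongr
        · exact norm_cexp_mul_I_mul_sq_le_one hn hre0 him
        · exact norm_mul_exp_norm_le_norm_cexp_sub_one hre
    _ = ‖z‖ ^ (k + 1) * rexp (-‖z‖) := by
        rw [exp_neg]
        field_simp

lemma exp_pow_mul_exp_neg_exp_le (k : ℕ) (x : ℝ) :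
    rexp x ^ (k + 1) * rexp (-rexp x) ≤ (k + 2).factorial * rexp (-1 * |x|) := by
  rcases le_total x 0 with hx | hx
  · have hfact : (1 : ℝ) ≤ (k + 2).factorial := mod_cast (k + 2).factorial_pos
    rw [abs_of_nonpos hx, neg_one_mul, neg_neg, pow_succ, mul_right_comm]
    gcongr
    exact (mul_le_one₀ (pow_le_one₀ (exp_nonneg x) (exp_le_one_iff.2 hx)) (exp_nonneg _)
      (exp_le_one_iff.2 (neg_nonpos.2 (exp_nonneg x)))).trans hfact
  · have hpow := (div_le_iff₀ (by positivity)).1 (pow_div_factorial_le_exp _ (exp_nonneg x) (k + 2))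
    rw [abs_of_nonneg hx, neg_one_mul, exp_neg, exp_neg, ← div_eq_mul_inv, ← div_eq_mul_inv,
      div_le_div_iff₀ (exp_pos _) (exp_pos _), ← pow_succ, mul_comm _ (rexp (rexp x))]
    exact hpow

lemma cexp_mul_ramanujanKernel_isBigO_stripEnds {n : ℝ} (hn : 0 ≤ n) (k : ℕ) :
    (fun w => Complex.exp w * ramanujanKernel n (k + 1) (Complex.exp w))
      =O[stripEnds (π / 4)] fun w => rexp (-1 * |w.re|) := by
  refine .of_bound (k + 2).factorial ?_
  filter_upwards [eventually_mem_closedStrip (π / 4)] with w hw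
  rw [norm_of_nonneg (exp_nonneg _)]
  refine (norm_mul_ramanujanKernel_le hn k (Complex.exp_ne_zero w)
    (two_thirds_mul_norm_le_re_cexp hw) (im_cexp_nonneg hw)).trans ?_
  rw [Complex.norm_exp]
  exact exp_pow_mul_exp_neg_exp_le k w.re

lemma differentiableOn_cexp_mul_ramanujanKernel (n : ℝ) (k : ℕ) :
    DifferentiableOn ℂ (fun w => Complex.exp w * ramanujanKernel n k (Complex.exp w))
      (closedStrip (π / 4)) := by
  unfold ramanujanKernel
  refine .mul (by fun_prop) (.div (by fun_prop) (by fun_prop) fun w hw => norm_pos_iff.1 ?_)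
  have hnorm : 0 < ‖Complex.exp w‖ := norm_pos_iff.2 (Complex.exp_ne_zero w)
  exact (by positivity : 0 < ‖Complex.exp w‖ * rexp ‖Complex.exp w‖).trans_le
    (norm_mul_exp_norm_le_norm_cexp_sub_one (two_thirds_mul_norm_le_re_cexp hw))

lemma integrableOn_and_integral_ramanujanKernel {n : ℝ} (hn : 0 ≤ n) (k : ℕ) :
    IntegrableOn (fun t : ℝ => ramanujanKernel n (k + 1) t) (Ioi 0) ∧
      ∫ t in Ioi (0 : ℝ), ramanujanKernel n (k + 1) t =
        ζ₈ * ∫ s in Ioi (0 : ℝ), ramanujanKernel n (k + 1) (ζ₈ * s) := by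
  simpa [ζ₈] using integrableOn_and_integral_Ioi_eq_integral_ray
    (differentiableOn_cexp_mul_ramanujanKernel n (k + 1))
    (cexp_mul_ramanujanKernel_isBigO_stripEnds hn k)
    (integrable_exp_neg_mul_abs one_pos) (tendsto_exp_neg_mul_abs_cocompact one_pos)

end SectorRotation

section Folding

open Polynomial

lemma integral_eq_two_mul_integral_Ioi_add {g : ℝ → ℂ} (hg : Integrable g) :
    ∫ s, g s = 2 * (∫ s in Ioi 0, g s) + ∫ s in Ioi 0, (g (-s) - g s) := by
  have hneg := integral_comp_neg_Ioi 0 g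
  rw [neg_zero] at hneg
  rw [integral_sub hg.comp_neg.integrableOn hg.integrableOn, hneg,
    ← intervalIntegral.integral_Iic_add_Ioi hg.integrableOn hg.integrableOn]
  ring

lemma polyGaussian_X_pow_neg (n : ℝ) {k : ℕ} (hk : Odd k) (w : ℂ) :
    polyGaussian n (X ^ k) (-w) = -polyGaussian n (X ^ k) w := by
  simp [polyGaussian, neg_div, hk.neg_pow]

lemma polyGaussian_div_neg_sub (n : ℝ) {k : ℕ} (hk : Odd k) {w : ℂ} (hw : rotatedExp w ≠ 1) :
    polyGaussian n (X ^ k) (-w) / (rotatedExp (-w) - 1) -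
      polyGaussian n (X ^ k) w / (rotatedExp w - 1) = polyGaussian n (X ^ k) w := by
  have hq : rotatedExp w - 1 ≠ 0 := sub_ne_zero.2 hw
  have hq0 : rotatedExp w ≠ 0 := Complex.exp_ne_zero _
  have hinv : (rotatedExp w)⁻¹ - 1 = -(rotatedExp w - 1) / rotatedExp w := by
    field_simp
    ring
  rw [polyGaussian_X_pow_neg n hk, rotatedExp_neg, hinv]
  field_simp

lemma integral_Ioi_pow_mul_exp_neg_mul_sq {b : ℝ} (hb : 0 < b) (m : ℕ) :
    ∫ s in Ioi (0 : ℝ), s ^ (2 * m + 1) * rexp (-b * s ^ 2) = m.factorial / (2 * b ^ (m + 1)) := by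
  have hint := integral_rpow_mul_exp_neg_mul_rpow (p := 2) (q := (2 * m + 1 : ℕ)) two_pos
    (neg_one_lt_zero.trans_le (Nat.cast_nonneg _)) hb
  have hhalf : ((2 * m + 1 : ℕ) + 1 : ℝ) / 2 = (m + 1 : ℕ) := by
    push_cast
    ring
  simp only [rpow_natCast, rpow_two, neg_div, hhalf, rpow_neg hb.le] at hint
  rw [hint, Nat.cast_succ, Gamma_nat_eq_factorial]
  field_simp

lemma integral_Ioi_polyGaussian_X_pow {n : ℝ} (hn : 0 < n) (m : ℕ) :
    ∫ s in Ioi (0 : ℝ), polyGaussian n (X ^ (2 * m + 1)) s =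
      (ζ₈ ^ (2 * m + 1))⁻¹ * (m.factorial / (2 * (π * n) ^ (m + 1)) : ℝ) := by
  rw [← integral_Ioi_pow_mul_exp_neg_mul_sq (mul_pos pi_pos hn), ← integral_complex_ofReal,
    ← integral_const_mul]
  congr 1 with s
  simp only [polyGaussian, eval_pow, eval_X]
  push_cast
  ring

lemma ramanujanKernel_ζ₈_mul (n : ℝ) (k : ℕ) (w : ℂ) :
    ramanujanKernel n k (ζ₈ * w) =
      ζ₈ ^ (2 * k) * (polyGaussian n (X ^ k) w / (rotatedExp w - 1)) := by
  have hsq : π * n * I * (ζ₈ * w) ^ 2 = -(π * n) * w ^ 2 := by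
    rw [mul_pow, ζ₈_sq]
    linear_combination (π * n * w ^ 2 : ℂ) * Complex.I_sq
  have hpow : (ζ₈ * w) ^ k = ζ₈ ^ (2 * k) * (w / ζ₈) ^ k := by
    rw [pow_mul, ← mul_pow]
    field_simp [ζ₈_ne_zero]
  rw [ramanujanKernel, hsq, hpow, ← mul_assoc (2 * π : ℂ) ζ₈]
  simp only [polyGaussian, rotatedExp, eval_pow, eval_X]
  ring

theorem two_mul_integral_ramanujanKernel {n : ℝ} (hn : 0 < n) (m : ℕ)
    (hint : Integrable fun s : ℝ => polyGaussian n (X ^ (2 * m + 1)) s / (rotatedExp s - 1)) :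
    2 * ∫ t in Ioi (0 : ℝ), ramanujanKernel n (2 * m + 1) t =
      I ^ (m + 1) * (ζ₈ ^ (2 * m + 1) *
        (∫ s : ℝ, polyGaussian n (X ^ (2 * m + 1)) s / (rotatedExp s - 1)) -
          (m.factorial / (2 * (π * n) ^ (m + 1)) : ℝ)) := by
  have hodd (s : ℝ) (hs : s ∈ Ioi (0 : ℝ)) :
      polyGaussian n (X ^ (2 * m + 1)) (-s : ℝ) / (rotatedExp (-s : ℝ) - 1) -
        polyGaussian n (X ^ (2 * m + 1)) s / (rotatedExp s - 1) =
          polyGaussian n (X ^ (2 * m + 1)) s := by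
    rw [Complex.ofReal_neg]
    exact polyGaussian_div_neg_sub n (odd_two_mul_add_one m)
      (rotatedExp_ofReal_ne_one (ne_of_gt hs))
  rw [integral_eq_two_mul_integral_Ioi_add hint, setIntegral_congr_fun measurableSet_Ioi hodd,
    integral_Ioi_polyGaussian_X_pow hn, (integrableOn_and_integral_ramanujanKernel hn.le (2 * m)).2]
  simp_rw [ramanujanKernel_ζ₈_mul]
  rw [integral_const_mul, ← ζ₈_sq, ← pow_mul]
  field_simp [ζ₈_ne_zero]
  ring

lemma re_two_mul_ramanujanKernel (n : ℝ) (k : ℕ) (t : ℝ) :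
    (2 * ramanujanKernel n k t).re = 2 * t ^ k * cos (π * n * t ^ 2) / (rexp (2 * π * t) - 1) := by
  have hpolar : 2 * ramanujanKernel n k t =
      (2 * t ^ k / (rexp (2 * π * t) - 1) : ℝ) * Complex.exp ((π * n * t ^ 2 : ℝ) * I) := by
    rw [ramanujanKernel]
    push_cast
    rw [mul_right_comm (π * n : ℂ)]
    ring
  rw [hpolar, Complex.re_ofReal_mul, Complex.exp_ofReal_mul_I_re]
  ring

lemma integrableOn_and_integral_ramanujan_of_kernel {n : ℝ} {m : ℕ}
    (hint : IntegrableOn (fun t : ℝ => ramanujanKernel n (2 * m + 1) t) (Ioi 0)) :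
    IntegrableOn (fun x => x ^ m * cos (π * n * x) / (rexp (2 * π * √x) - 1)) (Ioi 0) ∧
      ∫ x in Ioi 0, x ^ m * cos (π * n * x) / (rexp (2 * π * √x) - 1) =
        (2 * ∫ t in Ioi (0 : ℝ), ramanujanKernel n (2 * m + 1) t).re := by
  have hsubst (t : ℝ) (ht : t ∈ Ioi (0 : ℝ)) : (|2| * t ^ ((2 : ℝ) - 1)) • ((t ^ (2 : ℝ)) ^ m *
      cos (π * n * t ^ (2 : ℝ)) / (rexp (2 * π * √(t ^ (2 : ℝ))) - 1)) =
        (2 * ramanujanKernel n (2 * m + 1) t).re := by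
    have hone : (2 : ℝ) - 1 = 1 := by norm_num
    rw [re_two_mul_ramanujanKernel, hone, rpow_one, rpow_two, sqrt_sq (le_of_lt ht), smul_eq_mul,
      abs_two]
    ring
  have hint2 := hint.const_mul 2
  constructor
  · rw [← integrableOn_Ioi_comp_rpow_iff _ two_ne_zero]
    exact IntegrableOn.congr_fun hint2.re (fun t ht => (hsubst t ht).symm) measurableSet_Ioi
  · rw [← integral_comp_rpow_Ioi _ two_ne_zero, setIntegral_congr_fun measurableSet_Ioi hsubst,
      ← integral_const_mul]
    exact integral_re hint2

end Folding

section FifthPowers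

open Polynomial

lemma gaussianIntegral_X {n : ℝ} (hn : 0 < n) : gaussianIntegral n X = 0 := by
  have hderiv : gaussianIntegral n (derivative 1) = 0 := by simp [gaussianIntegral, polyGaussian]
  rw [← mul_one X, gaussianIntegral_X_mul hn, hderiv, mul_zero]

lemma gaussianIntegral_X_pow_add_two {n : ℝ} (hn : 0 < n) (k : ℕ) :
    gaussianIntegral n (X ^ (k + 2)) =
      (k + 1) * (-I / (2 * π * n)) * gaussianIntegral n (X ^ k) := by
  rw [pow_succ' X (k + 1), gaussianIntegral_X_mul hn, derivative_X_pow_succ,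
    gaussianIntegral_C_mul]
  ring

lemma gaussianIntegral_sextic {n : ℝ} (hn : 0 < n) (a b c d e : ℂ) {τ : ℂ}
    (hτ : -I / (2 * π * n) = τ) :
    gaussianIntegral n (C a * X ^ 6 + C b * X ^ 5 + C c * X ^ 4 + C d * X ^ 2 + C e) =
      (15 * a * τ ^ 3 + 3 * c * τ ^ 2 + d * τ + e) / √n := by
  rw [← mul_one (C e), ← pow_zero X]
  simp only [gaussianIntegral_add hn, gaussianIntegral_C_mul, gaussianIntegral_X_pow_add_two hn, hτ,
    pow_zero, pow_one, gaussianIntegral_one, gaussianIntegral_X hn]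
  push_cast
  ring

/-- The polynomial with values `∑ k < x, k ^ 5` at natural numbers `x`. -/
noncomputable def sumFifthPowers : ℂ[X] :=
  C (1 / 6) * X ^ 6 + C (-1 / 2) * X ^ 5 + C (5 / 12) * X ^ 4 + C (-1 / 12) * X ^ 2 + C 0

lemma sumFifthPowers_comp_X_add_one : sumFifthPowers.comp (X + 1) = sumFifthPowers + X ^ 5 := by
  refine Polynomial.funext fun x => ?_
  simp only [sumFifthPowers, eval_comp, eval_add, eval_mul, eval_pow, eval_X, eval_C, eval_one]
  ring

lemma sumFifthPowers_comp_X_add_half : sumFifthPowers.comp (X + C (1 / 2)) =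
    C (1 / 6) * X ^ 6 + C 0 * X ^ 5 + C (-5 / 24) * X ^ 4 + C (7 / 96) * X ^ 2 + C (-1 / 128) := by
  refine Polynomial.funext fun x => ?_
  simp only [sumFifthPowers, eval_comp, eval_add, eval_mul, eval_pow, eval_X, eval_C]
  ring

lemma gaussianIntegral_two_sumFifthPowers :
    gaussianIntegral 2 sumFifthPowers =
      ((-5 / (64 * π ^ 2) : ℝ) + (5 / (128 * π ^ 3) + 1 / (48 * π) : ℝ) * I) / √2 := by
  rw [sumFifthPowers, gaussianIntegral_sextic two_pos (τ := -I / (4 * π)) _ _ _ _ _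
    (by push_cast; ring), div_pow, div_pow, neg_sq, neg_pow I 3, Complex.I_sq, Complex.I_pow_three]
  push_cast
  ring

lemma gaussianIntegral_two_sumFifthPowers_comp :
    gaussianIntegral 2 (sumFifthPowers.comp (X + C (1 / 2))) =
      ((5 / (128 * π ^ 2) - 1 / 128 : ℝ) +
        (5 / (128 * π ^ 3) - 7 / (384 * π) : ℝ) * I) / √2 := by
  rw [sumFifthPowers_comp_X_add_half, gaussianIntegral_sextic two_pos (τ := -I / (4 * π)) _ _ _ _ _
    (by push_cast; ring), div_pow, div_pow, neg_sq, neg_pow I 3, Complex.I_sq, Complex.I_pow_three]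
  push_cast
  ring

lemma sum_range_two_cexp_mul_gaussianIntegral :
    ∑ r ∈ Finset.range 2, Complex.exp (π * I * r ^ 2 / (2 : ℕ)) *
        gaussianIntegral (2 : ℕ) (sumFifthPowers.comp (X + C (r / (2 : ℕ) : ℂ))) =
      gaussianIntegral 2 sumFifthPowers +
        I * gaussianIntegral 2 (sumFifthPowers.comp (X + C (1 / 2))) := by
  have hphase : Complex.exp (π * I / 2) = I := by
    rw [mul_div_right_comm, Complex.exp_pi_div_two_mul_I]
  simp [Finset.sum_range_succ, hphase]

lemma ζ₈_pow_five_div_sqrt_two : ζ₈ ^ 5 / √2 = -(1 + I) / 2 := by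
  have hζ : ζ₈ = (√2 / 2 : ℝ) * (1 + I) := by
    apply Complex.ext <;> simp [ζ₈_re, ζ₈_im]
  have hpow : ζ₈ ^ 5 = -ζ₈ := by
    linear_combination (ζ₈ ^ 3 + ζ₈ * I) * ζ₈_sq + ζ₈ * Complex.I_sq
  have hsqrt : (√2 : ℂ) ≠ 0 := by simp
  rw [hpow, hζ]
  push_cast
  field_simp

lemma re_I_pow_three_mul_ζ₈_pow_five_mul_sub (a b c d M : ℝ) :
    (I ^ 3 * (ζ₈ ^ 5 * ((a + b * I) / √2 + I * ((c + d * I) / √2)) - M)).re =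
      (d - a - b - c) / 2 := by
  have hcartesian : I ^ 3 * (ζ₈ ^ 5 * ((a + b * I) / √2 + I * ((c + d * I) / √2)) - M) =
      ((d - a - b - c) / 2 : ℝ) + (M + (a - b - c - d) / 2 : ℝ) * I := by
    calc _ = -I * (ζ₈ ^ 5 / √2 * (a + b * I + I * (c + d * I)) - M) := by
          rw [Complex.I_pow_three]
          ring
      _ = _ := by
          rw [ζ₈_pow_five_div_sqrt_two]
          push_cast
          linear_combination
            ((a + b + c) / 2 + (b + c + d) / 2 * I + d / 2 * (I ^ 2 - 1) : ℂ) * Complex.I_sq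
  rw [hcartesian, Complex.add_re, Complex.ofReal_re, Complex.re_ofReal_mul, Complex.I_re, mul_zero,
    add_zero]

lemma re_boundary_terms_two_two (M : ℝ) :
    (I ^ 3 * (ζ₈ ^ 5 * (gaussianIntegral 2 sumFifthPowers +
      I * gaussianIntegral 2 (sumFifthPowers.comp (X + C (1 / 2)))) - M)).re =
        1 / 256 * (1 - 5 / π + 5 / π ^ 2) := by
  rw [gaussianIntegral_two_sumFifthPowers, gaussianIntegral_two_sumFifthPowers_comp,
    re_I_pow_three_mul_ζ₈_pow_five_mul_sub]
  ring

end FifthPowers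

end RamanujanRC

/-- Such a `B` exists for every `m`: in terms of Bernoulli polynomials and numbers it is
`(B_{2m+2}(X) - B_{2m+2}) / (2m + 2)`. -/
theorem ramanujan_RC_two_two_general (m : ℕ) {n : ℕ} (hn : Even n) (hn0 : n ≠ 0)
    {B : Polynomial ℂ}
    (hB : B.comp (Polynomial.X + 1) = B + Polynomial.X ^ (2 * m + 1)) (h0 : B.eval 0 = 0) :
    IntegrableOn (fun x : ℝ => x ^ m * cos (π * n * x) / (rexp (2 * π * √x) - 1)) (Ioi 0) ∧
      ∫ x in Ioi (0 : ℝ), x ^ m * cos (π * n * x) / (rexp (2 * π * √x) - 1) =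
        (Complex.I ^ (m + 1) * (RamanujanRC.ζ₈ ^ (2 * m + 1) *
          (∑ r ∈ Finset.range n, Complex.exp (π * Complex.I * r ^ 2 / n) *
            RamanujanRC.gaussianIntegral n (B.comp (Polynomial.X + Polynomial.C (r / n : ℂ)))) -
          (m.factorial / (2 * (π * n) ^ (m + 1)) : ℝ))).re := by
  have h1 : B.eval 1 = 0 := by simpa [h0] using congrArg (Polynomial.eval 0) hB
  have hpos : (0 : ℝ) < n := mod_cast hn0.bot_lt
  obtain ⟨hint, hvalue⟩ := RamanujanRC.integrable_and_integral_polyGaussian_div hn hn0 hB h0 h1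
  rw [← hvalue, ← RamanujanRC.two_mul_integral_ramanujanKernel hpos m hint]
  exact RamanujanRC.integrableOn_and_integral_ramanujan_of_kernel
    (RamanujanRC.integrableOn_and_integral_ramanujanKernel hpos.le (2 * m)).1

/-- Ramanujan's integral `R_C(2, 2)` converges and equals `(1/256)(1 - 5/π + 5/π²)`. -/
theorem ramanujan_RC_two_two :
    IntegrableOn
      (fun x : ℝ => x ^ 2 * Real.cos (2 * π * x) / (Real.exp (2 * π * Real.sqrt x) - 1)) (Ioi 0) ∧
    (∫ x in Ioi (0:ℝ), x ^ 2 * Real.cos (2 * π * x) / (Real.exp (2 * π * Real.sqrt x) - 1)) =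
      (1 / 256) * (1 - 5 / π + 5 / π ^ 2) := by
  have h := ramanujan_RC_two_two_general 2 even_two two_ne_zero
    RamanujanRC.sumFifthPowers_comp_X_add_one (by simp [RamanujanRC.sumFifthPowers])
  rw [RamanujanRC.sum_range_two_cexp_mul_gaussianIntegral,
    RamanujanRC.re_boundary_terms_two_two] at h
  simpa [mul_comm π] using h
end

section
/- The integral R_C(0, 0) = ∫_0^∞ 1/(exp(2π√x) − 1) dx converges and equals 1/12. -/
open MeasureTheory Real Set

/-!
Expanding `1 / (exp t - 1)` as the geometric series `∑ exp (-(n + 1) t)` and integrating term by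
term shows that its Mellin transform is `Γ(s) ζ(s)` for `1 < re s`. The substitution
`t = 2π √x` turns `R_C(0, 0)` into the case `s = 2`, with value
`2 (2π)⁻² Γ(2) ζ(2) = (1 / (2π²)) (π² / 6) = 1/12`.
-/

section Substitution

variable {E : Type*} [NormedAddCommGroup E] [NormedSpace ℂ E] {f : ℝ → E} {s : ℂ} {m : E}

lemma hasMellin_comp_mul_left {b : ℝ} (hb : 0 < b) (hf : HasMellin f s m) :
    HasMellin (fun t ↦ f (b * t)) s ((b : ℂ) ^ (-s) • m) :=
  ⟨(MellinConvergent.comp_mul_left hb).2 hf.1, by rw [mellin_comp_mul_left f s hb, hf.2]⟩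

lemma hasMellin_comp_rpow {p : ℝ} (hp : p ≠ 0) (hf : HasMellin f s m) :
    HasMellin (fun t ↦ f (t ^ p)) (p * s) (|p|⁻¹ • m) := by
  have hs : p * s / p = s := mul_div_cancel_left₀ s (Complex.ofReal_ne_zero.2 hp)
  rw [HasMellin, MellinConvergent.comp_rpow hp, mellin_comp_rpow, hs, hf.2]
  exact ⟨hf.1, rfl⟩

end Substitution

lemma hasMellin_ofReal_iff {f : ℝ → ℝ} {s m : ℝ} :
    HasMellin (fun t ↦ (f t : ℂ)) s m ↔
      IntegrableOn (fun t ↦ t ^ (s - 1) * f t) (Ioi 0) ∧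
        ∫ t in Ioi 0, t ^ (s - 1) * f t = m := by
  have hcast : EqOn (fun t : ℝ ↦ (t : ℂ) ^ ((s : ℂ) - 1) • (f t : ℂ))
      (fun t ↦ ((t ^ (s - 1) * f t : ℝ) : ℂ)) (Ioi 0) := fun t ht ↦ by
    simp [Complex.ofReal_cpow (le_of_lt ht)]
  rw [HasMellin, MellinConvergent, mellin, integrableOn_congr_fun hcast measurableSet_Ioi,
    setIntegral_congr_fun measurableSet_Ioi hcast, integral_complex_ofReal, Complex.ofReal_inj]
  exact and_congr_left' ⟨fun h ↦ h.re, fun h ↦ h.ofReal⟩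

lemma hasSum_exp_neg_nat_succ_mul {t : ℝ} (ht : 0 < t) :
    HasSum (fun n : ℕ ↦ exp (-(n + 1) * t)) (1 / (exp t - 1)) := by
  have hlt : exp (-t) < 1 := exp_lt_one_iff.2 (neg_neg_of_pos ht)
  have hval : exp (-t) * (1 - exp (-t))⁻¹ = 1 / (exp t - 1) := by
    rw [exp_neg, ← mul_inv_rev, sub_mul, inv_mul_cancel₀ (exp_ne_zero t), one_mul, one_div]
  have hterm (n : ℕ) : exp (-(n + 1) * t) = exp (-t) * exp (-t) ^ n := by
    rw [← exp_nat_mul, ← exp_add]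
    ring_nf
  simpa only [hterm, hval] using
    (hasSum_geometric_of_lt_one (exp_pos (-t)).le hlt).mul_left (exp (-t))

lemma mellin_one_div_exp_sub_one {s : ℂ} (hs : 1 < s.re) :
    mellin (fun t ↦ ((1 / (exp t - 1) : ℝ) : ℂ)) s = Complex.Gamma s * riemannZeta s := by
  have hsum : HasSum (fun n : ℕ ↦ Complex.Gamma s * 1 / ((n + 1 : ℝ) : ℂ) ^ s)
      (mellin (fun t ↦ ((1 / (exp t - 1) : ℝ) : ℂ)) s) := by
    refine hasSum_mellin (fun n ↦ Or.inr (by positivity)) (by linarith) (fun t ht ↦ ?_) ?_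
    · simpa only [one_mul] using Complex.hasSum_ofReal.2 (hasSum_exp_neg_nat_succ_mul ht)
    · simpa using (summable_nat_add_iff 1).2 (Real.summable_one_div_nat_rpow.2 hs)
  rw [zeta_eq_tsum_one_div_nat_add_one_cpow hs, ← tsum_mul_left, ← hsum.tsum_eq]
  simp [div_eq_mul_inv]

lemma hasMellin_one_div_exp_sub_one {s : ℂ} (hs : 1 < s.re) :
    HasMellin (fun t ↦ ((1 / (exp t - 1) : ℝ) : ℂ)) s (Complex.Gamma s * riemannZeta s) := by
  have hmellin := mellin_one_div_exp_sub_one hs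
  have hne : Complex.Gamma s * riemannZeta s ≠ 0 :=
    mul_ne_zero (Complex.Gamma_ne_zero_of_re_pos (by linarith))
      (riemannZeta_ne_zero_of_one_lt_re hs)
  -- A divergent integral has the junk value `0`, so the nonzero value forces convergence.
  exact ⟨.of_integral_ne_zero (hmellin.trans_ne hne), hmellin⟩

lemma hasMellin_one_div_exp_mul_rpow_sub_one {b p : ℝ} {s : ℂ} (hb : 0 < b) (hp : p ≠ 0)
    (hs : 1 < s.re) :
    HasMellin (fun t ↦ ((1 / (exp (b * t ^ p) - 1) : ℝ) : ℂ)) (p * s)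
      (|p|⁻¹ • (b : ℂ) ^ (-s) • (Complex.Gamma s * riemannZeta s)) :=
  hasMellin_comp_rpow hp (hasMellin_comp_mul_left hb (hasMellin_one_div_exp_sub_one hs))

/-- Ramanujan's integral `R_C(0, 0)` converges and equals `1/12`. -/
theorem ramanujan_RC_zero_zero :
    IntegrableOn
      (fun x : ℝ => 1 / (Real.exp (2 * π * Real.sqrt x) - 1)) (Ioi 0) ∧
    (∫ x in Ioi (0:ℝ), 1 / (Real.exp (2 * π * Real.sqrt x) - 1)) = 1 / 12 := by
  have hmellin := hasMellin_one_div_exp_mul_rpow_sub_one (b := 2 * π) (p := 1 / 2) (s := 2)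
    (by positivity) (by norm_num) (by norm_num)
  have harg : ((1 / 2 : ℝ) : ℂ) * 2 = (1 : ℝ) := by norm_num
  have hval : |(1 / 2 : ℝ)|⁻¹ • ((2 * π : ℝ) : ℂ) ^ (-2 : ℂ) •
      (Complex.Gamma 2 * riemannZeta 2) = (1 / 12 : ℝ) := by
    have hpi : (π : ℂ) ≠ 0 := Complex.ofReal_ne_zero.2 pi_ne_zero
    have hGamma : Complex.Gamma 2 = 1 := by simp
    rw [riemannZeta_two, hGamma, Complex.cpow_neg, Complex.cpow_ofNat, abs_of_pos one_half_pos]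
    push_cast [Complex.real_smul, smul_eq_mul]
    field_simp
    norm_num
  rw [harg, hval, hasMellin_ofReal_iff] at hmellin
  simpa only [sub_self, rpow_zero, one_mul, ← sqrt_eq_rpow] using hmellin
end

section
/- The integral R_C(0, 1) = ∫_0^∞ cos(πx)/(exp(2π√x) − 1) dx converges and equals (2 − √2)/8. -/
open MeasureTheory Real Set

/-!
The substitution `x = t ^ 2` and an integration by parts turn `R_C(0, 1)` into
`1 / 2 * ∫ t in Ioi 0, sin (π * t ^ 2) / sinh (π * t) ^ 2`. Consider, with
`c = I - exp (π / 4 * I)`, the function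

`F z = (exp (π z + I π z²) - cosh² (π z) - sinh (π z) - c sinh² (π z)) / (sinh² (π z) cosh (π z))`.

Its singularities in the strip `0 ≤ Im z ≤ 1` are removable and it decays there like
`1 / cosh (π Re z)`, so `∫ F x = ∫ F (x + I)` by Cauchy's theorem. The symmetry `F (I - z) = -F z`
forces this common value to be `0`. Finally `Im (F x + F (-x))` is twice
`sin (π x²) / sinh² (π x) - Im c / cosh (π x)`, while `∫ 1 / cosh (π x) = 1` and
`Im c = 1 - √2 / 2`.
-/

open Filter Topology
open Complex (I)
open scoped Interval

theorem sq_le_sinh_sq (x : ℝ) : x ^ 2 ≤ sinh x ^ 2 := by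
  rw [sq_le_sq, abs_sinh]
  exact self_le_sinh_iff.2 (abs_nonneg x)

theorem abs_sin_mul_sq_le (a x : ℝ) : |sin (a * x ^ 2)| ≤ |a| * x ^ 2 :=
  abs_sin_le_abs.trans_eq (by rw [abs_mul, abs_sq])

theorem two_mul_mul_exp_le_exp_two_mul_sub_one {x : ℝ} (hx : 0 ≤ x) :
    2 * x * exp x ≤ exp (2 * x) - 1 :=
  calc 2 * x * exp x ≤ 2 * sinh x * exp x := by gcongr; exact self_le_sinh_iff.2 hx
    _ = exp x ^ 2 - exp (-x) * exp x := by rw [sinh_eq]; ring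
    _ = exp (2 * x) - 1 := by rw [← exp_nat_mul, ← exp_add]; simp

theorem four_mul_sinh_sq_mul_exp_two_mul (x : ℝ) :
    4 * sinh x ^ 2 * exp (2 * x) = (exp (2 * x) - 1) ^ 2 :=
  calc 4 * sinh x ^ 2 * exp (2 * x)
      = (exp x ^ 2 - exp (-x) * exp x) ^ 2 := by
        rw [sinh_eq, two_mul x, exp_add]; ring
    _ = (exp (2 * x) - 1) ^ 2 := by rw [← exp_nat_mul, ← exp_add]; simp

theorem abs_deriv_sinh_smul_inv_one_add_sinh_sq (x : ℝ) :
    |cosh x| • (1 + sinh x ^ 2)⁻¹ = (cosh x)⁻¹ := by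
  have hcosh : cosh x ≠ 0 := (cosh_pos x).ne'
  rw [abs_of_pos (cosh_pos x), smul_eq_mul, add_comm, ← cosh_sq]
  field_simp

theorem integrable_inv_cosh : Integrable fun x : ℝ => (cosh x)⁻¹ := by
  have h := (integrableOn_image_iff_integrableOn_abs_deriv_smul MeasurableSet.univ
    (fun x _ => (hasDerivAt_sinh x).hasDerivWithinAt) sinh_injective.injOn
    (fun x : ℝ => (1 + x ^ 2)⁻¹)).1 integrable_inv_one_add_sq.integrableOn
  simpa only [abs_deriv_sinh_smul_inv_one_add_sinh_sq, integrableOn_univ] using h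

theorem integral_inv_cosh : ∫ x : ℝ, (cosh x)⁻¹ = π := by
  have h := integral_image_eq_integral_abs_deriv_smul MeasurableSet.univ
    (fun x _ => (hasDerivAt_sinh x).hasDerivWithinAt) sinh_injective.injOn
    (fun x : ℝ => (1 + x ^ 2)⁻¹)
  simpa only [abs_deriv_sinh_smul_inv_one_add_sinh_sq, image_univ, sinh_surjective.range_eq,
    setIntegral_univ, integral_univ_inv_one_add_sq] using h.symm

theorem integrable_of_norm_le_inv_cosh {E : Type*} [NormedAddCommGroup E] {f : ℝ → E}
    (hf : Continuous f) {a C R : ℝ} (ha : a ≠ 0)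
    (hbound : ∀ x, R ≤ |x| → ‖f x‖ ≤ C * (cosh (a * x))⁻¹) : Integrable f := by
  have h_isBigO : f =O[cocompact ℝ] fun x => C * (cosh (a * x))⁻¹ :=
    .of_norm_eventuallyLE <| (tendsto_norm_cocompact_atTop.eventually_ge_atTop R).mono hbound
  exact hf.locallyIntegrable.integrable_of_isBigO_cocompact h_isBigO
    (((integrable_inv_cosh.comp_mul_left' ha).const_mul C).integrableAtFilter _)

theorem tendsto_inv_cosh_cocompact {a : ℝ} (ha : a ≠ 0) :
    Tendsto (fun x : ℝ => (cosh (a * x))⁻¹) (cocompact ℝ) (𝓝 0) := by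
  refine Tendsto.inv_tendsto_atTop (tendsto_atTop_mono (fun x => ?_)
    (tendsto_norm_cocompact_atTop.const_mul_atTop (abs_pos.2 ha)))
  calc |a| * ‖x‖ = |a * x| := (abs_mul a x).symm
    _ ≤ sinh |a * x| := self_le_sinh_iff.2 (abs_nonneg _)
    _ ≤ cosh (a * x) := (sinh_lt_cosh _).le.trans_eq (cosh_abs _)

theorem integrable_sin_mul_sq_div_sinh_sq (a : ℝ) {b : ℝ} (hb : b ≠ 0) :
    Integrable fun x : ℝ => sin (a * x ^ 2) / sinh (b * x) ^ 2 := by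
  refine (integrable_inv_one_add_sq.const_mul ((1 + |a|) / b ^ 2)).mono'
    (Measurable.aestronglyMeasurable (by fun_prop)) (.of_forall fun x => ?_)
  rcases eq_or_ne x 0 with rfl | hx
  · simpa using by positivity
  have hsin : |sin (a * x ^ 2)| * (1 + x ^ 2) ≤ (1 + |a|) * x ^ 2 := by
    have h_one := abs_sin_le_one (a * x ^ 2)
    have h_sq := abs_sin_mul_sq_le a x
    nlinarith [sq_nonneg x]
  rw [norm_div, norm_pow, norm_eq_abs, norm_eq_abs, sq_abs]
  calc |sin (a * x ^ 2)| / sinh (b * x) ^ 2 ≤ |sin (a * x ^ 2)| / (b * x) ^ 2 :=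
        div_le_div_of_nonneg_left (abs_nonneg _) (by positivity) (sq_le_sinh_sq _)
    _ ≤ (1 + |a|) / b ^ 2 * (1 + x ^ 2)⁻¹ := by
        rw [← div_eq_mul_inv, div_div, div_le_div_iff₀ (by positivity) (by positivity)]
        calc |sin (a * x ^ 2)| * (b ^ 2 * (1 + x ^ 2))
            = b ^ 2 * (|sin (a * x ^ 2)| * (1 + x ^ 2)) := by ring
          _ ≤ b ^ 2 * ((1 + |a|) * x ^ 2) := by gcongr
          _ = (1 + |a|) * (b * x) ^ 2 := by ring

theorem integrableOn_mul_cos_mul_sq_div_exp_sub_one (a : ℝ) {b : ℝ} (hb : 0 < b) :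
    IntegrableOn (fun t : ℝ => 2 * t * (cos (a * t ^ 2) / (exp (2 * (b * t)) - 1))) (Ioi 0) := by
  refine ((exp_neg_integrableOn_Ioi 0 hb).const_mul b⁻¹).mono'
    (Measurable.aestronglyMeasurable (by fun_prop)) ?_
  filter_upwards [ae_restrict_mem measurableSet_Ioi] with t ht
  have ht : 0 < t := ht
  have hexp : 2 * (b * t) * exp (b * t) ≤ |exp (2 * (b * t)) - 1| :=
    (two_mul_mul_exp_le_exp_two_mul_sub_one (by positivity)).trans (le_abs_self _)
  simp only [norm_mul, norm_div, norm_eq_abs, abs_two, abs_of_pos ht]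
  calc 2 * t * (|cos (a * t ^ 2)| / |exp (2 * (b * t)) - 1|)
      ≤ 2 * t * (1 / (2 * (b * t) * exp (b * t))) := by gcongr; exact abs_cos_le_one _
    _ = b⁻¹ * exp (-b * t) := by rw [neg_mul, exp_neg]; field_simp

theorem two_mul_rpow_smul_comp_rpow_two (a b : ℝ) {t : ℝ} (ht : t ∈ Ioi 0) :
    (2 * t ^ ((2 : ℝ) - 1)) •
        (cos (a * t ^ (2 : ℝ)) / (exp (2 * b * √(t ^ (2 : ℝ))) - 1)) =
      2 * t * (cos (a * t ^ 2) / (exp (2 * (b * t)) - 1)) := by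
  rw [rpow_two, sqrt_sq (le_of_lt ht), smul_eq_mul, mul_assoc 2 b]
  norm_num

theorem integrableOn_cos_mul_div_exp_sqrt_sub_one (a : ℝ) {b : ℝ} (hb : 0 < b) :
    IntegrableOn (fun x : ℝ => cos (a * x) / (exp (2 * b * √x) - 1)) (Ioi 0) := by
  rw [← integrableOn_Ioi_comp_rpow_iff _ two_ne_zero, abs_two,
    integrableOn_congr_fun (fun t => two_mul_rpow_smul_comp_rpow_two a b) measurableSet_Ioi]
  exact integrableOn_mul_cos_mul_sq_div_exp_sub_one a hb

theorem integral_cos_mul_div_exp_sqrt_sub_one_eq_integral_comp_sq (a b : ℝ) :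
    ∫ x in Ioi (0 : ℝ), cos (a * x) / (exp (2 * b * √x) - 1) =
      ∫ t in Ioi (0 : ℝ), 2 * t * (cos (a * t ^ 2) / (exp (2 * (b * t)) - 1)) := by
  rw [← integral_comp_rpow_Ioi_of_pos two_pos]
  exact setIntegral_congr_fun measurableSet_Ioi fun t => two_mul_rpow_smul_comp_rpow_two a b

theorem hasDerivAt_sin_mul_sq_div_exp_sub_one {a b t : ℝ} (ha : a ≠ 0) (hbt : b * t ≠ 0) :
    HasDerivAt (fun t : ℝ => sin (a * t ^ 2) / a / (exp (2 * (b * t)) - 1))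
      (2 * t * (cos (a * t ^ 2) / (exp (2 * (b * t)) - 1)) -
        b / (2 * a) * (sin (a * t ^ 2) / sinh (b * t) ^ 2)) t := by
  have hexp : exp (2 * (b * t)) - 1 ≠ 0 := by simpa [sub_eq_zero] using hbt
  have hsinh : sinh (b * t) ≠ 0 := by simpa using hbt
  have h_lin : HasDerivAt (fun t : ℝ => 2 * (b * t)) (2 * b) t := by
    simpa using ((hasDerivAt_id t).const_mul b).const_mul 2
  have h_sq : HasDerivAt (fun t : ℝ => a * t ^ 2) (a * (2 * t)) t := by
    simpa using (hasDerivAt_pow 2 t).const_mul a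
  refine ((h_sq.sin.div_const a).div (h_lin.exp.sub_const 1) hexp).congr_deriv ?_
  have h_csch : sin (a * t ^ 2) / sinh (b * t) ^ 2 =
      4 * exp (2 * (b * t)) * sin (a * t ^ 2) / (exp (2 * (b * t)) - 1) ^ 2 := by
    rw [← four_mul_sinh_sq_mul_exp_two_mul]
    field_simp [hsinh]
  rw [h_csch]
  field_simp
  ring

theorem norm_sin_mul_sq_div_exp_sub_one_le (a : ℝ) {b t : ℝ} (hb : 0 < b) (ht : 0 ≤ t) :
    ‖sin (a * t ^ 2) / a / (exp (2 * (b * t)) - 1)‖ ≤ t * exp (-b * t) / (2 * b) := by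
  rcases ht.eq_or_lt with rfl | ht
  · simp
  rcases eq_or_ne a 0 with rfl | ha
  · simpa using by positivity
  have hexp : 2 * (b * t) * exp (b * t) ≤ |exp (2 * (b * t)) - 1| :=
    (two_mul_mul_exp_le_exp_two_mul_sub_one (by positivity)).trans (le_abs_self _)
  simp only [norm_div, norm_eq_abs]
  calc |sin (a * t ^ 2)| / |a| / |exp (2 * (b * t)) - 1|
      ≤ |a| * t ^ 2 / |a| / (2 * (b * t) * exp (b * t)) := by
        gcongr; exact abs_sin_mul_sq_le a t
    _ = t * exp (-b * t) / (2 * b) := by rw [neg_mul, exp_neg]; field_simp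

theorem continuousWithinAt_sin_mul_sq_div_exp_sub_one (a : ℝ) {b : ℝ} (hb : 0 < b) :
    ContinuousWithinAt (fun t : ℝ => sin (a * t ^ 2) / a / (exp (2 * (b * t)) - 1)) (Ici 0) 0 := by
  have hlim : Tendsto (fun t : ℝ => t * exp (-b * t) / (2 * b)) (𝓝[≥] 0) (𝓝 0) :=
    tendsto_nhdsWithin_of_tendsto_nhds <| by
      simpa using Continuous.tendsto (f := fun t : ℝ => t * exp (-b * t) / (2 * b)) (by fun_prop) 0
  rw [ContinuousWithinAt, mul_zero, mul_zero, exp_zero, sub_self, div_zero]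
  refine squeeze_zero_norm' ?_ hlim
  filter_upwards [self_mem_nhdsWithin] with t ht
  exact norm_sin_mul_sq_div_exp_sub_one_le a hb ht

theorem tendsto_sin_mul_sq_div_exp_sub_one_atTop (a : ℝ) {b : ℝ} (hb : 0 < b) :
    Tendsto (fun t : ℝ => sin (a * t ^ 2) / a / (exp (2 * (b * t)) - 1)) atTop (𝓝 0) := by
  have hlim : Tendsto (fun t : ℝ => t * exp (-b * t) / (2 * b)) atTop (𝓝 0) := by
    simpa using (tendsto_rpow_mul_exp_neg_mul_atTop_nhds_zero 1 b hb).div_const (2 * b)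
  refine squeeze_zero_norm' ?_ hlim
  filter_upwards [eventually_ge_atTop 0] with t ht
  exact norm_sin_mul_sq_div_exp_sub_one_le a hb ht

theorem integral_cos_mul_div_exp_sqrt_sub_one {a b : ℝ} (ha : a ≠ 0) (hb : 0 < b) :
    ∫ x in Ioi (0 : ℝ), cos (a * x) / (exp (2 * b * √x) - 1) =
      b / (2 * a) * ∫ t in Ioi (0 : ℝ), sin (a * t ^ 2) / sinh (b * t) ^ 2 := by
  have h_cos := integrableOn_mul_cos_mul_sq_div_exp_sub_one a hb
  have h_sin := ((integrable_sin_mul_sq_div_sinh_sq a hb.ne').const_mul (b / (2 * a))).integrableOn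
    (s := Ioi 0)
  have h_parts := integral_Ioi_of_hasDerivAt_of_tendsto
    (continuousWithinAt_sin_mul_sq_div_exp_sub_one a hb)
    (fun t ht => hasDerivAt_sin_mul_sq_div_exp_sub_one ha (mul_pos hb ht).ne')
    (h_cos.sub h_sin) (tendsto_sin_mul_sq_div_exp_sub_one_atTop a hb)
  rw [integral_sub h_cos h_sin, integral_const_mul] at h_parts
  rw [integral_cos_mul_div_exp_sqrt_sub_one_eq_integral_comp_sq]
  simpa [sub_eq_zero] using h_parts

theorem tendsto_intervalIntegral_of_tendsto_comap_re {E ι : Type*} [NormedAddCommGroup E]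
    [NormedSpace ℝ E] {g : ℂ → E} {a b : ℝ} {l : Filter ι} {c : ι → ℝ}
    (hg : Tendsto g (comap Complex.re (cocompact ℝ) ⊓ 𝓟 {z | z.im ∈ [[a, b]]}) (𝓝 0))
    (hc : Tendsto c l (cocompact ℝ)) :
    Tendsto (fun i => ∫ y in a..b, g (c i + y * I)) l (𝓝 0) := by
  rw [NormedAddGroup.tendsto_nhds_zero] at hg ⊢
  intro ε hε
  have h_small := hc.eventually <| eventually_comap.1 <| eventually_inf_principal.1 <|
    hg (ε / (|b - a| + 1)) (by positivity)
  filter_upwards [h_small] with i hi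
  calc ‖∫ y in a..b, g (c i + y * I)‖ ≤ ε / (|b - a| + 1) * |b - a| :=
        intervalIntegral.norm_integral_le_of_norm_le_const fun y hy =>
          (hi _ (by simp) (by simpa using uIoc_subset_uIcc hy)).le
    _ < ε := by
        rw [div_mul_eq_mul_div, div_lt_iff₀ (by positivity)]
        gcongr
        exact lt_add_one _

theorem integral_horizontal_eq_of_tendsto_zero {E : Type*} [NormedAddCommGroup E]
    [NormedSpace ℂ E] {g : ℂ → E} {a b : ℝ}
    (hg : DifferentiableOn ℂ g {z | z.im ∈ [[a, b]]})
    (hg_zero : Tendsto g (comap Complex.re (cocompact ℝ) ⊓ 𝓟 {z | z.im ∈ [[a, b]]}) (𝓝 0))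
    (ha : Integrable fun x : ℝ => g (x + a * I)) (hb : Integrable fun x : ℝ => g (x + b * I)) :
    ∫ x : ℝ, g (x + a * I) = ∫ x : ℝ, g (x + b * I) := by
  have h_rect (R : ℝ) :=
    Complex.integral_boundary_rect_eq_zero_of_differentiableOn g (-R + a * I) (R + b * I)
      (hg.mono fun z hz => by simpa using hz.2)
  have h_bot := intervalIntegral_tendsto_integral ha tendsto_neg_atTop_atBot tendsto_id
  have h_top := intervalIntegral_tendsto_integral hb tendsto_neg_atTop_atBot tendsto_id
  have h_right := tendsto_intervalIntegral_of_tendsto_comap_re hg_zero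
    (tendsto_id.mono_right atTop_le_cocompact)
  have h_left := tendsto_intervalIntegral_of_tendsto_comap_re hg_zero
    (tendsto_neg_atTop_atBot.mono_right atBot_le_cocompact)
  have h_lim := ((h_bot.sub h_top).add (h_right.const_smul I)).sub (h_left.const_smul I)
  have := tendsto_nhds_unique h_lim
    (tendsto_const_nhds.congr fun R => (by simpa using (h_rect R).symm))
  simpa [sub_eq_zero] using this

theorem meromorphicOrderAt_div_nonneg {𝕜 : Type*} [NontriviallyNormedField 𝕜] {f g : 𝕜 → 𝕜}
    {z : 𝕜} (hf : AnalyticAt 𝕜 f z) (hg : AnalyticAt 𝕜 g z)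
    (h : analyticOrderAt g z ≤ analyticOrderAt f z) :
    0 ≤ meromorphicOrderAt (f / g) z := by
  rw [meromorphicOrderAt_div hf.meromorphicAt hg.meromorphicAt, hf.meromorphicOrderAt_eq,
    hg.meromorphicOrderAt_eq]
  generalize analyticOrderAt f z = m at h ⊢
  generalize analyticOrderAt g z = n at h ⊢
  cases m <;> cases n
  · simp
  · simp
  · simp at h
  · exact WithTop.coe_nonneg.2 (sub_nonneg.2 (by simpa using h))

theorem exists_analyticOnNhd_eq_of_meromorphicOrderAt_nonneg {𝕜 E : Type*}
    [NontriviallyNormedField 𝕜] [NormedAddCommGroup E] [NormedSpace 𝕜 E]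
    {f : 𝕜 → E} {U : Set 𝕜} (hf : MeromorphicOn f U) (h : ∀ z ∈ U, 0 ≤ meromorphicOrderAt f z) :
    ∃ g, AnalyticOnNhd 𝕜 g U ∧ ∀ z ∈ U, AnalyticAt 𝕜 f z → g z = f z := by
  refine ⟨toMeromorphicNFOn f U, fun z hz => ?_, fun z hz hfz => ?_⟩
  · rw [← (meromorphicNFOn_toMeromorphicNFOn f U hz).meromorphicOrderAt_nonneg_iff_analyticAt,
      meromorphicOrderAt_toMeromorphicNFOn hf hz]
    exact h z hz
  · rw [toMeromorphicNFOn_eq_toMeromorphicNFAt hf hz,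
      toMeromorphicNFAt_eq_self.2 hfz.meromorphicNFAt]

theorem norm_sinh_le_cosh_re (z : ℂ) : ‖Complex.sinh z‖ ≤ cosh z.re := by
  rw [Complex.sinh, norm_div, Complex.norm_two, cosh_eq]
  gcongr
  simpa [Complex.norm_exp] using norm_sub_le (Complex.exp z) (Complex.exp (-z))

theorem norm_cosh_le_cosh_re (z : ℂ) : ‖Complex.cosh z‖ ≤ cosh z.re := by
  rw [Complex.cosh, norm_div, Complex.norm_two, cosh_eq]
  gcongr
  simpa [Complex.norm_exp] using norm_add_le (Complex.exp z) (Complex.exp (-z))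

theorem abs_sinh_re_le_norm_sinh (z : ℂ) : |sinh z.re| ≤ ‖Complex.sinh z‖ := by
  rw [Complex.sinh, norm_div, Complex.norm_two, sinh_eq, abs_div, abs_two]
  gcongr
  simpa [Complex.norm_exp] using abs_norm_sub_norm_le (Complex.exp z) (Complex.exp (-z))

theorem abs_sinh_re_le_norm_cosh (z : ℂ) : |sinh z.re| ≤ ‖Complex.cosh z‖ := by
  rw [Complex.cosh, norm_div, Complex.norm_two, sinh_eq, abs_div, abs_two]
  gcongr
  simpa [Complex.norm_exp] using abs_norm_sub_norm_le (Complex.exp z) (-Complex.exp (-z))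

theorem complex_sinh_eq_zero_iff {z : ℂ} : Complex.sinh z = 0 ↔ ∃ n : ℤ, z = n * π * I := by
  have hsinh : Complex.sinh z = I * Complex.sin (-(z * I)) := by
    rw [Complex.sin_neg, Complex.sin_mul_I]
    linear_combination Complex.sinh z * Complex.I_sq
  rw [hsinh, mul_eq_zero_iff_left Complex.I_ne_zero, Complex.sin_eq_zero_iff]
  refine exists_congr fun n => ⟨fun h => ?_, fun h => ?_⟩
  · linear_combination I * h + z * Complex.I_sq
  · linear_combination -I * h - n * π * Complex.I_sq

theorem complex_cosh_eq_zero_iff {z : ℂ} :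
    Complex.cosh z = 0 ↔ ∃ n : ℤ, z = (n + 1 / 2) * π * I := by
  have hcosh : Complex.cosh z = Complex.cos (-(z * I)) := by
    rw [Complex.cos_neg, Complex.cos_mul_I]
  rw [hcosh, Complex.cos_eq_zero_iff]
  refine exists_congr fun n => ⟨fun h => ?_, fun h => ?_⟩
  · linear_combination I * h + z * Complex.I_sq
  · linear_combination -I * h - (n + 1 / 2) * π * Complex.I_sq

theorem cosh_le_two_mul_abs_sinh {x : ℝ} (hx : 1 ≤ |x|) : cosh x ≤ 2 * |sinh x| := by
  have hsinh : 1 ≤ sinh x ^ 2 := (one_le_sq_iff_one_le_abs x |>.2 hx).trans (sq_le_sinh_sq x)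
  refine le_of_sq_le_sq ?_ (by positivity)
  rw [mul_pow, sq_abs, cosh_sq]
  linarith

theorem analyticOrderAt_sinh_const_mul {a z : ℂ} (ha : a ≠ 0) (h : Complex.sinh (a * z) = 0) :
    analyticOrderAt (fun z => Complex.sinh (a * z)) z = 1 := by
  have h_lin : HasDerivAt (fun z : ℂ => a * z) a z := by
    simpa using (hasDerivAt_id z).const_mul a
  have hcosh : Complex.cosh (a * z) ≠ 0 := fun h0 => by simpa [h, h0] using Complex.cosh_sq (a * z)
  refine AnalyticAt.analyticOrderAt_eq_one_of_zero_deriv_ne_zero (by fun_prop) h ?_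
  rw [h_lin.csinh.deriv]
  exact mul_ne_zero hcosh ha

theorem analyticOrderAt_cosh_const_mul {a z : ℂ} (ha : a ≠ 0) (h : Complex.cosh (a * z) = 0) :
    analyticOrderAt (fun z => Complex.cosh (a * z)) z = 1 := by
  have h_lin : HasDerivAt (fun z : ℂ => a * z) a z := by
    simpa using (hasDerivAt_id z).const_mul a
  have hsinh : Complex.sinh (a * z) ≠ 0 := fun h0 => by simpa [h, h0] using Complex.cosh_sq (a * z)
  refine AnalyticAt.analyticOrderAt_eq_one_of_zero_deriv_ne_zero (by fun_prop) h ?_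
  rw [h_lin.ccosh.deriv]
  exact mul_ne_zero hsinh ha

/-- The numerator of `ramanujanKernel`. The coefficient of `sinh (πz) ^ 2` is the one that makes it
vanish at `I / 2`; it has double zeros at `0` and `I` whatever that coefficient is. -/
noncomputable def ramanujanNum (z : ℂ) : ℂ :=
  Complex.exp (π * z + I * π * z ^ 2) - Complex.cosh (π * z) ^ 2 - Complex.sinh (π * z) -
    (I - Complex.exp (π / 4 * I)) * Complex.sinh (π * z) ^ 2

/-- The denominator of `ramanujanKernel`: in the strip `0 ≤ Im z ≤ 1` it has double zeros at `0` and
`I` and a simple zero at `I / 2`. -/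
noncomputable def ramanujanDen (z : ℂ) : ℂ :=
  Complex.sinh (π * z) ^ 2 * Complex.cosh (π * z)

/-- The contour integrand. All its singularities in the strip `0 ≤ Im z ≤ 1` are removable; the
convention `x / 0 = 0` gives it the value `0` there. -/
noncomputable def ramanujanKernel (z : ℂ) : ℂ :=
  ramanujanNum z / ramanujanDen z

theorem analyticAt_ramanujanNum (z : ℂ) : AnalyticAt ℂ ramanujanNum z := by
  unfold ramanujanNum
  fun_prop

theorem analyticAt_ramanujanDen (z : ℂ) : AnalyticAt ℂ ramanujanDen z := by
  unfold ramanujanDen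
  fun_prop

theorem deriv_ramanujanNum (z : ℂ) :
    deriv ramanujanNum z = π * ((1 + 2 * I * z) * Complex.exp (π * z + I * π * z ^ 2) -
      Complex.cosh (π * z) - 2 * (1 + I - Complex.exp (π / 4 * I)) *
        (Complex.sinh (π * z) * Complex.cosh (π * z))) := by
  have h_lin : HasDerivAt (fun z : ℂ => π * z) π z := by
    simpa using (hasDerivAt_id z).const_mul (π : ℂ)
  have h_quad : HasDerivAt (fun z : ℂ => I * π * z ^ 2) (I * π * (2 * z)) z := by
    simpa using (hasDerivAt_pow 2 z).const_mul (I * π)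
  have h_num := (((h_lin.add h_quad).cexp.sub (h_lin.ccosh.pow 2)).sub h_lin.csinh).sub
    ((h_lin.csinh.pow 2).const_mul (I - Complex.exp (π / 4 * I)))
  refine (h_num.congr_deriv ?_).deriv
  simp only [Pi.add_apply]
  ring

theorem two_le_analyticOrderAt_ramanujanNum {z : ℂ} (hsinh : Complex.sinh (π * z) = 0)
    (hexp : Complex.exp (π * z + I * π * z ^ 2) = 1)
    (hcosh : Complex.cosh (π * z) = 1 + 2 * I * z) :
    2 ≤ analyticOrderAt ramanujanNum z := by
  have hcosh_sq : Complex.cosh (π * z) ^ 2 = 1 := by simp [Complex.cosh_sq, hsinh]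
  refine (natCast_le_analyticOrderAt_iff_iteratedDeriv_eq_zero
    (analyticAt_ramanujanNum z) (n := 2)).2 fun i hi => ?_
  interval_cases i
  · simp [ramanujanNum, hexp, hsinh, hcosh_sq]
  · simp [deriv_ramanujanNum, hexp, hsinh, hcosh]

theorem ramanujanNum_half_mul_I : ramanujanNum (1 / 2 * I) = 0 := by
  have hexp : π * (1 / 2 * I) + I * π * (1 / 2 * I) ^ 2 = π / 4 * I := by
    linear_combination (π / 4 * I) * Complex.I_sq
  have hpi : (π : ℂ) * (1 / 2 * I) = π / 2 * I := by ring
  rw [ramanujanNum, hexp, hpi, Complex.cosh_mul_I, Complex.sinh_mul_I, Complex.cos_pi_div_two,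
    Complex.sin_pi_div_two]
  linear_combination -(I - Complex.exp (π / 4 * I)) * Complex.I_sq

theorem analyticOrderAt_ramanujanDen_of_sinh_eq_zero {z : ℂ} (h : Complex.sinh (π * z) = 0) :
    analyticOrderAt ramanujanDen z = 2 := by
  have hsinh : AnalyticAt ℂ (fun z => Complex.sinh (π * z)) z := by fun_prop
  have hcosh : AnalyticAt ℂ (fun z => Complex.cosh (π * z)) z := by fun_prop
  have hcosh_ne : Complex.cosh (π * z) ≠ 0 := fun h0 => by
    simpa [h, h0] using Complex.cosh_sq (π * z)
  refine (analyticOrderAt_mul (hsinh.pow 2) hcosh).trans ?_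
  rw [analyticOrderAt_pow hsinh,
    analyticOrderAt_sinh_const_mul (Complex.ofReal_ne_zero.2 pi_ne_zero) h,
    hcosh.analyticOrderAt_eq_zero.2 hcosh_ne]
  rfl

theorem analyticOrderAt_ramanujanDen_of_cosh_eq_zero {z : ℂ} (h : Complex.cosh (π * z) = 0) :
    analyticOrderAt ramanujanDen z = 1 := by
  have hsinh : AnalyticAt ℂ (fun z => Complex.sinh (π * z)) z := by fun_prop
  have hcosh : AnalyticAt ℂ (fun z => Complex.cosh (π * z)) z := by fun_prop
  have hsinh_ne : Complex.sinh (π * z) ^ 2 ≠ 0 := fun h0 => by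
    simpa [h, h0] using Complex.cosh_sq (π * z)
  refine (analyticOrderAt_mul (hsinh.pow 2) hcosh).trans ?_
  rw [(hsinh.pow 2).analyticOrderAt_eq_zero.2 hsinh_ne,
    analyticOrderAt_cosh_const_mul (Complex.ofReal_ne_zero.2 pi_ne_zero) h, zero_add]

theorem analyticOrderAt_ramanujanDen_le {z : ℂ} (hz : z.im ∈ Icc 0 1) :
    analyticOrderAt ramanujanDen z ≤ analyticOrderAt ramanujanNum z := by
  have hπ : (π : ℂ) ≠ 0 := Complex.ofReal_ne_zero.2 pi_ne_zero
  rcases eq_or_ne (Complex.sinh (π * z)) 0 with hsinh | hsinh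
  · rw [analyticOrderAt_ramanujanDen_of_sinh_eq_zero hsinh]
    obtain ⟨n, hn⟩ := complex_sinh_eq_zero_iff.1 hsinh
    obtain rfl : z = n * I := mul_left_cancel₀ hπ (by rw [hn]; ring)
    have h_mem : (0 : ℝ) ≤ n ∧ (n : ℝ) ≤ 1 := by simpa using hz
    norm_cast at h_mem
    obtain rfl | rfl : n = 0 ∨ n = 1 := by lia
    · exact two_le_analyticOrderAt_ramanujanNum hsinh (by simp) (by simp)
    · refine two_le_analyticOrderAt_ramanujanNum hsinh ?_ ?_
      · simp [sq, mul_comm I]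
      · rw [Int.cast_one, one_mul, Complex.cosh_mul_I, Complex.cos_pi]
        linear_combination -2 * Complex.I_sq
  rcases eq_or_ne (Complex.cosh (π * z)) 0 with hcosh | hcosh
  · rw [analyticOrderAt_ramanujanDen_of_cosh_eq_zero hcosh, Order.one_le_iff_ne_zero,
      (analyticAt_ramanujanNum z).analyticOrderAt_ne_zero]
    obtain ⟨n, hn⟩ := complex_cosh_eq_zero_iff.1 hcosh
    obtain rfl : z = (n + 1 / 2) * I := mul_left_cancel₀ hπ (by rw [hn]; ring)
    have him : (((n : ℂ) + 1 / 2) * I).im = n + 1 / 2 := by simp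
    obtain rfl : n = 0 := by
      have h_lower : (-1 : ℝ) < n := by linarith [hz.1]
      have h_upper : (n : ℝ) < 1 := by linarith [hz.2]
      norm_cast at h_lower h_upper
      lia
    simpa using ramanujanNum_half_mul_I
  · rw [(analyticAt_ramanujanDen z).analyticOrderAt_eq_zero.2
      (mul_ne_zero (pow_ne_zero 2 hsinh) hcosh)]
    exact zero_le

theorem sinh_pi_mul_I_sub (z : ℂ) : Complex.sinh (π * (I - z)) = Complex.sinh (π * z) := by
  simp [mul_sub, Complex.sinh_sub, Complex.sinh_mul_I, Complex.cosh_mul_I]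

theorem cosh_pi_mul_I_sub (z : ℂ) : Complex.cosh (π * (I - z)) = -Complex.cosh (π * z) := by
  simp [mul_sub, Complex.cosh_sub, Complex.sinh_mul_I, Complex.cosh_mul_I]

theorem ramanujanNum_I_sub (z : ℂ) : ramanujanNum (I - z) = ramanujanNum z := by
  have hexp : π * (I - z) + I * π * (I - z) ^ 2 = π * z + I * π * z ^ 2 := by
    linear_combination (I * π - 2 * π * z) * Complex.I_sq
  rw [ramanujanNum, hexp, sinh_pi_mul_I_sub, cosh_pi_mul_I_sub, neg_sq, ramanujanNum]

theorem ramanujanDen_I_sub (z : ℂ) : ramanujanDen (I - z) = -ramanujanDen z := by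
  rw [ramanujanDen, sinh_pi_mul_I_sub, cosh_pi_mul_I_sub, mul_neg, ramanujanDen]

theorem ramanujanKernel_I_sub (z : ℂ) : ramanujanKernel (I - z) = -ramanujanKernel z := by
  rw [ramanujanKernel, ramanujanKernel, ramanujanNum_I_sub, ramanujanDen_I_sub, div_neg]

theorem norm_exp_add_mul_sq_le {z : ℂ} (hz : z.im ∈ Icc 0 1) :
    ‖Complex.exp (π * z + I * π * z ^ 2)‖ ≤ 2 * cosh (π * z.re) := by
  have hre : (π * z + I * π * z ^ 2).re = π * z.re * (1 - 2 * z.im) := by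
    simp only [sq, Complex.add_re, Complex.mul_re, Complex.mul_im, Complex.ofReal_re,
      Complex.ofReal_im, Complex.I_re, Complex.I_im]
    ring
  have h_abs : |1 - 2 * z.im| ≤ 1 := abs_le.2 ⟨by linarith [hz.2], by linarith [hz.1]⟩
  calc ‖Complex.exp (π * z + I * π * z ^ 2)‖
      = exp (π * z.re * (1 - 2 * z.im)) := by rw [Complex.norm_exp, hre]
    _ ≤ exp |π * z.re| := by
        gcongr
        refine (le_abs_self _).trans ?_
        rw [abs_mul]
        exact mul_le_of_le_one_right (abs_nonneg _) h_abs
    _ ≤ exp (π * z.re) + exp (-(π * z.re)) := exp_abs_le _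
    _ = 2 * cosh (π * z.re) := by rw [cosh_eq]; ring

theorem norm_ramanujanNum_le {z : ℂ} (hz : z.im ∈ Icc 0 1) :
    ‖ramanujanNum z‖ ≤ 6 * cosh (π * z.re) ^ 2 := by
  have hre : (π * z).re = π * z.re := Complex.re_ofReal_mul π z
  have hcosh := one_le_cosh (π * z.re)
  have hconst : ‖I - Complex.exp (π / 4 * I)‖ ≤ 2 := by
    have hexp : ‖Complex.exp (π / 4 * I)‖ = 1 := by
      exact_mod_cast Complex.norm_exp_ofReal_mul_I (π / 4)
    calc ‖I - Complex.exp (π / 4 * I)‖ ≤ ‖I‖ + ‖Complex.exp (π / 4 * I)‖ := norm_sub_le _ _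
      _ = 2 := by rw [Complex.norm_I, hexp]; norm_num
  calc ‖ramanujanNum z‖
      ≤ ‖Complex.exp (π * z + I * π * z ^ 2)‖ + ‖Complex.cosh (π * z)‖ ^ 2 +
          ‖Complex.sinh (π * z)‖ +
          ‖I - Complex.exp (π / 4 * I)‖ * ‖Complex.sinh (π * z)‖ ^ 2 := by
        simp only [← norm_pow, ← norm_mul]
        exact norm_sub_le_of_le (norm_sub_le_of_le (norm_sub_le _ _) le_rfl) le_rfl
    _ ≤ 2 * cosh (π * z.re) + cosh (π * z.re) ^ 2 + cosh (π * z.re) +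
          2 * cosh (π * z.re) ^ 2 := by
        gcongr
        · exact norm_exp_add_mul_sq_le hz
        · simpa only [hre] using norm_cosh_le_cosh_re (π * z)
        · simpa only [hre] using norm_sinh_le_cosh_re (π * z)
        · simpa only [hre] using norm_sinh_le_cosh_re (π * z)
    _ ≤ 6 * cosh (π * z.re) ^ 2 := by nlinarith

theorem abs_sinh_pow_three_le_norm_ramanujanDen (z : ℂ) :
    |sinh (π * z.re)| ^ 3 ≤ ‖ramanujanDen z‖ := by
  have hre : (π * z).re = π * z.re := Complex.re_ofReal_mul π z
  rw [ramanujanDen, norm_mul, norm_pow, pow_succ, ← hre]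
  gcongr
  · exact abs_sinh_re_le_norm_sinh _
  · exact abs_sinh_re_le_norm_cosh _

theorem ramanujanDen_ne_zero {z : ℂ} (hz : z.re ≠ 0) : ramanujanDen z ≠ 0 := by
  have hsinh : 0 < |sinh (π * z.re)| := by simp [hz, pi_ne_zero]
  exact norm_pos_iff.1 <| (pow_pos hsinh 3).trans_le (abs_sinh_pow_three_le_norm_ramanujanDen z)

theorem norm_ramanujanKernel_le {z : ℂ} (hz : z.im ∈ Icc 0 1) (hre : 1 ≤ |z.re|) :
    ‖ramanujanKernel z‖ ≤ 48 * (cosh (π * z.re))⁻¹ := by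
  have hsinh : cosh (π * z.re) ≤ 2 * |sinh (π * z.re)| := by
    refine cosh_le_two_mul_abs_sinh ?_
    rw [abs_mul, abs_of_pos pi_pos]
    nlinarith [pi_gt_three]
  have h_den : cosh (π * z.re) ^ 3 / 8 ≤ ‖ramanujanDen z‖ :=
    calc cosh (π * z.re) ^ 3 / 8 ≤ (2 * |sinh (π * z.re)|) ^ 3 / 8 := by gcongr
      _ = |sinh (π * z.re)| ^ 3 := by ring
      _ ≤ ‖ramanujanDen z‖ := abs_sinh_pow_three_le_norm_ramanujanDen z
  calc ‖ramanujanKernel z‖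
      ≤ 6 * cosh (π * z.re) ^ 2 / (cosh (π * z.re) ^ 3 / 8) := by
        rw [ramanujanKernel, norm_div]
        gcongr
        exact norm_ramanujanNum_le hz
    _ = 48 * (cosh (π * z.re))⁻¹ := by field_simp; norm_num

theorem exists_analyticOnNhd_eqOn_ramanujanKernel :
    ∃ g : ℂ → ℂ, AnalyticOnNhd ℂ g {z | z.im ∈ Icc (0 : ℝ) 1} ∧
      EqOn g ramanujanKernel {z | z.im ∈ Icc 0 1 ∧ z.re ≠ 0} := by
  obtain ⟨g, hg, hg_eq⟩ := exists_analyticOnNhd_eq_of_meromorphicOrderAt_nonneg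
    (f := ramanujanNum / ramanujanDen) (U := {z | z.im ∈ Icc (0 : ℝ) 1})
    (fun z _ => (analyticAt_ramanujanNum z).meromorphicAt.div
      (analyticAt_ramanujanDen z).meromorphicAt)
    (fun z hz => meromorphicOrderAt_div_nonneg (analyticAt_ramanujanNum z)
      (analyticAt_ramanujanDen z) (analyticOrderAt_ramanujanDen_le hz))
  refine ⟨g, hg, fun z hz => hg_eq z hz.1 ?_⟩
  exact (analyticAt_ramanujanNum z).div (analyticAt_ramanujanDen z) (ramanujanDen_ne_zero hz.2)

theorem tendsto_zero_of_eqOn_ramanujanKernel {g : ℂ → ℂ}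
    (hg : EqOn g ramanujanKernel {z | z.im ∈ Icc 0 1 ∧ z.re ≠ 0}) :
    Tendsto g (comap Complex.re (cocompact ℝ) ⊓ 𝓟 {z | z.im ∈ Icc (0 : ℝ) 1}) (𝓝 0) := by
  have h_cosh : Tendsto (fun x : ℝ => 48 * (cosh (π * x))⁻¹) (cocompact ℝ) (𝓝 0) := by
    simpa only [mul_zero] using (tendsto_inv_cosh_cocompact pi_ne_zero).const_mul 48
  refine squeeze_zero_norm' (eventually_inf_principal.2 ?_)
    (h_cosh.comp (tendsto_comap.mono_left inf_le_left))
  filter_upwards [tendsto_comap.eventually <|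
    tendsto_norm_cocompact_atTop.eventually_ge_atTop 1] with z hre hz
  rw [hg ⟨hz, abs_pos.1 (one_pos.trans_le hre)⟩]
  exact norm_ramanujanKernel_le hz hre

theorem integrable_horizontal_of_eqOn_ramanujanKernel {g : ℂ → ℂ}
    (hg : ContinuousOn g {z | z.im ∈ Icc (0 : ℝ) 1})
    (hg_eq : EqOn g ramanujanKernel {z | z.im ∈ Icc 0 1 ∧ z.re ≠ 0})
    {y : ℝ} (hy : y ∈ Icc 0 1) :
    Integrable fun x : ℝ => g (x + y * I) := by
  have h_mem (x : ℝ) : (x + y * I : ℂ).im ∈ Icc (0 : ℝ) 1 := by simpa using hy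
  refine integrable_of_norm_le_inv_cosh (C := 48) (R := 1)
    (hg.comp_continuous (by fun_prop) h_mem) pi_ne_zero fun x hx => ?_
  have hre : (x + y * I : ℂ).re = x := by simp
  rw [hg_eq ⟨h_mem x, by rw [hre]; exact abs_pos.1 (one_pos.trans_le hx)⟩]
  simpa only [hre] using norm_ramanujanKernel_le (h_mem x) (by rwa [hre])

theorem horizontal_ae_eq_ramanujanKernel {g : ℂ → ℂ}
    (hg : EqOn g ramanujanKernel {z | z.im ∈ Icc 0 1 ∧ z.re ≠ 0})
    {y : ℝ} (hy : y ∈ Icc 0 1) :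
    (fun x : ℝ => g (x + y * I)) =ᵐ[volume] fun x : ℝ => ramanujanKernel (x + y * I) := by
  filter_upwards [compl_mem_ae_iff.2 (measure_singleton (0 : ℝ))] with x hx
  exact hg ⟨by simpa using hy, by simpa using hx⟩

theorem integrable_ramanujanKernel : Integrable fun x : ℝ => ramanujanKernel x := by
  obtain ⟨g, hg, hg_eq⟩ := exists_analyticOnNhd_eqOn_ramanujanKernel
  have h_zero : (0 : ℝ) ∈ Icc (0 : ℝ) 1 := by simp
  simpa using (integrable_horizontal_of_eqOn_ramanujanKernel hg.continuousOn hg_eq h_zero).congr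
    (horizontal_ae_eq_ramanujanKernel hg_eq h_zero)

theorem integral_ramanujanKernel_add_I :
    ∫ x : ℝ, ramanujanKernel (x + I) = ∫ x : ℝ, ramanujanKernel x := by
  obtain ⟨g, hg, hg_eq⟩ := exists_analyticOnNhd_eqOn_ramanujanKernel
  have h_zero : (0 : ℝ) ∈ Icc (0 : ℝ) 1 := by simp
  have h_one : (1 : ℝ) ∈ Icc (0 : ℝ) 1 := by simp
  have h_shift := integral_horizontal_eq_of_tendsto_zero (g := g) (a := 0) (b := 1)
  rw [uIcc_of_le zero_le_one] at h_shift
  have h_eq := h_shift hg.differentiableOn (tendsto_zero_of_eqOn_ramanujanKernel hg_eq)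
    (integrable_horizontal_of_eqOn_ramanujanKernel hg.continuousOn hg_eq h_zero)
    (integrable_horizontal_of_eqOn_ramanujanKernel hg.continuousOn hg_eq h_one)
  rw [integral_congr_ae (horizontal_ae_eq_ramanujanKernel hg_eq h_zero),
    integral_congr_ae (horizontal_ae_eq_ramanujanKernel hg_eq h_one)] at h_eq
  simpa using h_eq.symm

theorem integral_ramanujanKernel : ∫ x : ℝ, ramanujanKernel x = 0 := by
  have h_reflect : ∫ x : ℝ, ramanujanKernel (x + I) = -∫ x : ℝ, ramanujanKernel x :=
    calc ∫ x : ℝ, ramanujanKernel (x + I)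
        = ∫ x : ℝ, -ramanujanKernel (-x : ℝ) := by
          congr with x
          rw [← ramanujanKernel_I_sub, Complex.ofReal_neg, sub_neg_eq_add, add_comm]
      _ = -∫ x : ℝ, ramanujanKernel x := by
          rw [integral_neg, integral_neg_eq_self (fun x : ℝ => ramanujanKernel x)]
  exact self_eq_neg.1 (integral_ramanujanKernel_add_I.symm.trans h_reflect)

theorem ramanujanKernel_add_ramanujanKernel_neg {x : ℝ} (hx : x ≠ 0) :
    ramanujanKernel x + ramanujanKernel (-x) =
      2 * (Complex.exp (I * π * x ^ 2) / Complex.sinh (π * x) ^ 2 -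
        Complex.cosh (π * x) / Complex.sinh (π * x) ^ 2 -
        (I - Complex.exp (π / 4 * I)) / Complex.cosh (π * x)) := by
  have h_den : Complex.sinh (π * x) ^ 2 * Complex.cosh (π * x) ≠ 0 :=
    ramanujanDen_ne_zero (z := x) hx
  have hsinh : Complex.sinh (π * x) ≠ 0 := fun h => by simp [h] at h_den
  have hcosh : Complex.cosh (π * x) ≠ 0 := fun h => by simp [h] at h_den
  have hexp : Complex.exp (π * x + I * π * x ^ 2) + Complex.exp (-(π * x) + I * π * x ^ 2) =
      2 * Complex.cosh (π * x) * Complex.exp (I * π * x ^ 2) := by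
    rw [Complex.cosh, Complex.exp_add, Complex.exp_add]
    ring
  simp only [ramanujanKernel, ramanujanNum, ramanujanDen, mul_neg, Complex.sinh_neg,
    Complex.cosh_neg, neg_sq]
  generalize Complex.exp (π * x + I * π * x ^ 2) = e_pos at hexp ⊢
  generalize Complex.exp (-(π * x) + I * π * x ^ 2) = e_neg at hexp ⊢
  generalize Complex.exp (I * π * x ^ 2) = e at hexp ⊢
  field_simp
  linear_combination hexp

theorem im_ramanujanKernel_add_ramanujanKernel_neg {x : ℝ} (hx : x ≠ 0) :
    (ramanujanKernel x + ramanujanKernel (-x)).im =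
      2 * (sin (π * x ^ 2) / sinh (π * x) ^ 2 - (1 - √2 / 2) * (cosh (π * x))⁻¹) := by
  have hexp : Complex.exp (I * π * x ^ 2) = Complex.exp ((π * x ^ 2 : ℝ) * I) := by
    push_cast
    ring_nf
  have hconst : (Complex.exp (π / 4 * I)).im = √2 / 2 := by
    have h_im := Complex.exp_ofReal_mul_I_im (π / 4)
    push_cast at h_im
    rw [h_im, sin_pi_div_four]
  rw [ramanujanKernel_add_ramanujanKernel_neg hx, hexp]
  simp only [← Complex.ofReal_mul, ← Complex.ofReal_sinh, ← Complex.ofReal_cosh,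
    ← Complex.ofReal_pow, Complex.mul_im, Complex.re_ofNat, Complex.im_ofNat, Complex.sub_im,
    Complex.div_ofReal_im, Complex.exp_ofReal_mul_I_im, Complex.ofReal_im, Complex.I_im, hconst]
  ring

theorem integral_inv_cosh_pi_mul : ∫ x : ℝ, (cosh (π * x))⁻¹ = 1 := by
  rw [Measure.integral_comp_mul_left (fun x => (cosh x)⁻¹), integral_inv_cosh,
    abs_of_pos (inv_pos.2 pi_pos), smul_eq_mul, inv_mul_cancel₀ pi_ne_zero]

theorem integral_sin_mul_sq_div_sinh_sq :
    ∫ x : ℝ, sin (π * x ^ 2) / sinh (π * x) ^ 2 = 1 - √2 / 2 := by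
  have h_sin := integrable_sin_mul_sq_div_sinh_sq π pi_ne_zero
  have h_cosh := (integrable_inv_cosh.comp_mul_left' pi_ne_zero).const_mul (1 - √2 / 2)
  have h_neg : Integrable fun x : ℝ => ramanujanKernel (-x) := by
    simpa using integrable_ramanujanKernel.comp_neg
  have h_zero : ∫ x : ℝ, (ramanujanKernel x + ramanujanKernel (-x)) = 0 := by
    have h_int_neg : ∫ x : ℝ, ramanujanKernel (-x) = ∫ x : ℝ, ramanujanKernel x := by
      simpa using integral_neg_eq_self (fun x : ℝ => ramanujanKernel x) volume
    rw [integral_add integrable_ramanujanKernel h_neg, h_int_neg, integral_ramanujanKernel,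
      add_zero]
  have h_im : ∫ x : ℝ, 2 * (sin (π * x ^ 2) / sinh (π * x) ^ 2 -
      (1 - √2 / 2) * (cosh (π * x))⁻¹) = 0 :=
    calc _ = ∫ x : ℝ, (ramanujanKernel x + ramanujanKernel (-x)).im := by
          refine integral_congr_ae ?_
          filter_upwards [compl_mem_ae_iff.2 (measure_singleton (0 : ℝ))] with x hx
          exact (im_ramanujanKernel_add_ramanujanKernel_neg hx).symm
      _ = (∫ x : ℝ, (ramanujanKernel x + ramanujanKernel (-x))).im :=
          integral_im (integrable_ramanujanKernel.add h_neg)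
      _ = 0 := by rw [h_zero, Complex.zero_im]
  rw [integral_const_mul, integral_sub h_sin h_cosh, integral_const_mul,
    integral_inv_cosh_pi_mul] at h_im
  linarith

theorem integral_Ioi_sin_mul_sq_div_sinh_sq :
    ∫ x in Ioi (0 : ℝ), sin (π * x ^ 2) / sinh (π * x) ^ 2 = (1 - √2 / 2) / 2 := by
  have h_even (x : ℝ) : sinh (π * |x|) ^ 2 = sinh (π * x) ^ 2 := by
    rcases abs_choice x with h | h <;> simp [h]
  have h_abs := integral_comp_abs (f := fun x : ℝ => sin (π * x ^ 2) / sinh (π * x) ^ 2)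
  simp only [sq_abs, h_even, integral_sin_mul_sq_div_sinh_sq] at h_abs
  linarith

/-- Ramanujan's integral `R_C(0, 1)` converges and equals `(2 - √2)/8`. -/
theorem ramanujan_RC_zero_one :
    IntegrableOn
      (fun x : ℝ => Real.cos (π * x) / (Real.exp (2 * π * Real.sqrt x) - 1)) (Ioi 0) ∧
    (∫ x in Ioi (0:ℝ), Real.cos (π * x) / (Real.exp (2 * π * Real.sqrt x) - 1)) =
      (2 - Real.sqrt 2) / 8 := by
  refine ⟨integrableOn_cos_mul_div_exp_sqrt_sub_one π pi_pos, ?_⟩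
  rw [integral_cos_mul_div_exp_sqrt_sub_one pi_ne_zero pi_pos,
    integral_Ioi_sin_mul_sq_div_sinh_sq]
  field_simp
  ring
end
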